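/- Assume Π > 0 and Γ > 0 at every (x,y) ∈ U × (ℝⁿ∖{0}). Then the spray coefficients of the (α,β,γ)-metric F are related to those of α by G^i = ^αG^i + (α/Π)·[Ψ_s·^βs^i_0 + Ψ_s̄·^γs^i_0] + (1/(2Γ))·[Γ₁·b^i + Γ₂·γ^i + (1/Ψ)·Γ₃·α^i], where α^i = y^i/α, b^i = a^{ij}b_j, γ^i = a^{ij}γ_j, Γ₁ = [Ψ_ss + (g²−s̄²)J]·R^β + [Ψ_ss̄ − (θ−ss̄)J]·R^γ, Γ₂ = [Ψ_s̄s̄ + (b²−s²)J]·R^γ + [Ψ_ss̄ − (θ−ss̄)J]·R^β, Γ₃ = [ρ₁ + π₂(θ−ss̄) − π₁(g²−s̄²)]·R^β + [ρ̄₁ − π₂(b²−s²) + π₁(θ−ss̄)]·R^γ, R^β = ^βr_00 − (2α/Π)[Ψ_s·^βs_0 + Ψ_s̄·^γs̄_0], R^γ = ^γr_00 − (2α/Π)[Ψ_s·^βs̄_0 + Ψ_s̄·^γs_0]. -/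

import Mathlib

noncomputable section

open Set

/-- `a^{ij} u_i v_j` : the pairing of two covectors via the inverse matrix. -/
def quadInv {n : ℕ} (a : Matrix (Fin n) (Fin n) ℝ) (u v : Fin n → ℝ) : ℝ :=
  ∑ i, ∑ j, a⁻¹ i j * u i * v j

/-- `α(y) = √(a_{ij} y^i y^j)`. -/
def alph {n : ℕ} (a : Matrix (Fin n) (Fin n) ℝ) (y : Fin n → ℝ) : ℝ :=
  Real.sqrt (∑ i, ∑ j, a i j * y i * y j)

/-- `v_i y^i`. -/
def oneForm {n : ℕ} (v y : Fin n → ℝ) : ℝ := ∑ i, v i * y i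

/-- `s(y) = v_i y^i / α(y)`. -/
def sVar {n : ℕ} (a : Matrix (Fin n) (Fin n) ℝ) (v y : Fin n → ℝ) : ℝ :=
  oneForm v y / alph a y

/-- The (α,β,γ)-metric `F(y) = α·Ψ(s, s̄)`. -/
def Fm {n : ℕ} (a : Matrix (Fin n) (Fin n) ℝ) (bv gv : Fin n → ℝ)
    (Ψ : ℝ → ℝ → ℝ) (y : Fin n → ℝ) : ℝ :=
  alph a y * Ψ (sVar a bv y) (sVar a gv y)

/-- Partial derivative of a function on `ℝⁿ` in the `i`-th coordinate direction. -/
def pd {n : ℕ} (f : (Fin n → ℝ) → ℝ) (y : Fin n → ℝ) (i : Fin n) : ℝ :=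
  fderiv ℝ f y (Pi.single i 1)

/-- Second partial derivative. -/
def pd2 {n : ℕ} (f : (Fin n → ℝ) → ℝ) (y : Fin n → ℝ) (i j : Fin n) : ℝ :=
  pd (fun z => pd f z j) y i

/-- Partial derivative with respect to the first slot (`∂/∂s`). -/
def Ds (Ψ : ℝ → ℝ → ℝ) : ℝ → ℝ → ℝ := fun p q => deriv (fun u => Ψ u q) p

/-- Partial derivative with respect to the second slot (`∂/∂s̄`). -/
def Dt (Ψ : ℝ → ℝ → ℝ) : ℝ → ℝ → ℝ := fun p q => deriv (fun v => Ψ p v) q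

/-- `h_i = v_i − s·α_i`. -/
def hl {n : ℕ} (a : Matrix (Fin n) (Fin n) ℝ) (v y : Fin n → ℝ) (i : Fin n) : ℝ :=
  v i - sVar a v y * pd (alph a) y i

/-- Fundamental tensor `g_{ij} = ½ ∂²(F²)/∂yⁱ∂yʲ`. -/
def fundT {n : ℕ} (F : (Fin n → ℝ) → ℝ) (y : Fin n → ℝ) (i j : Fin n) : ℝ :=
  (1 / 2) * pd2 (fun z => F z ^ 2) y i j

/-- `Π = Ψ − sΨ_s − s̄Ψ_s̄`. -/
def PiF (Ψ : ℝ → ℝ → ℝ) (p q : ℝ) : ℝ := Ψ p q - p * Ds Ψ p q - q * Dt Ψ p q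

/-- `J = (Ψ_ss Ψ_s̄s̄ − Ψ_ss̄²)/Π`. -/
def JF (Ψ : ℝ → ℝ → ℝ) (p q : ℝ) : ℝ :=
  (Ds (Ds Ψ) p q * Dt (Dt Ψ) p q - Dt (Ds Ψ) p q ^ 2) / PiF Ψ p q

/-- `Γ`, with `B = b²`, `G = g²`, `Θ = θ` as real parameters. -/
def GammaF (Ψ : ℝ → ℝ → ℝ) (B G Θ p q : ℝ) : ℝ :=
  PiF Ψ p q + (B - p ^ 2) * Ds (Ds Ψ) p q + (G - q ^ 2) * Dt (Dt Ψ) p q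
    + 2 * (Θ - p * q) * Dt (Ds Ψ) p q
    + ((B - p ^ 2) * (G - q ^ 2) - (Θ - p * q) ^ 2) * JF Ψ p q

/-- `ρ = Ψ(Ψ − sΨ_s − s̄Ψ_s̄)`. -/
def rhoF (Ψ : ℝ → ℝ → ℝ) : ℝ → ℝ → ℝ := fun p q => Ψ p q * PiF Ψ p q

/-- `ρ₀ = ΨΨ_ss + Ψ_s²`. -/
def rho0F (Ψ : ℝ → ℝ → ℝ) : ℝ → ℝ → ℝ := fun p q => Ψ p q * Ds (Ds Ψ) p q + Ds Ψ p q ^ 2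

/-- `ρ̄₀ = ΨΨ_s̄s̄ + Ψ_s̄²`. -/
def rhobar0F (Ψ : ℝ → ℝ → ℝ) : ℝ → ℝ → ℝ := fun p q => Ψ p q * Dt (Dt Ψ) p q + Dt Ψ p q ^ 2

/-- `ρ₃ = ΨΨ_ss̄ + Ψ_sΨ_s̄`. -/
def rho3F (Ψ : ℝ → ℝ → ℝ) : ℝ → ℝ → ℝ :=
  fun p q => Ψ p q * Dt (Ds Ψ) p q + Ds Ψ p q * Dt Ψ p q

/-- `ρ₁ = ΨΨ_s − sρ₀ − s̄ρ₃`. -/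
def rho1F (Ψ : ℝ → ℝ → ℝ) : ℝ → ℝ → ℝ :=
  fun p q => Ψ p q * Ds Ψ p q - p * rho0F Ψ p q - q * rho3F Ψ p q

/-- `ρ̄₁ = ΨΨ_s̄ − s̄ρ̄₀ − sρ₃`. -/
def rhobar1F (Ψ : ℝ → ℝ → ℝ) : ℝ → ℝ → ℝ :=
  fun p q => Ψ p q * Dt Ψ p q - q * rhobar0F Ψ p q - p * rho3F Ψ p q

/-- `ρ₂ = −sρ₁ − s̄ρ̄₁`. -/
def rho2F (Ψ : ℝ → ℝ → ℝ) : ℝ → ℝ → ℝ :=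
  fun p q => -p * rho1F Ψ p q - q * rhobar1F Ψ p q

/-- `π₁ = Ψ_s̄Ψ_ss̄ − Ψ_sΨ_s̄s̄ + sΨJ`. -/
def pi1F (Ψ : ℝ → ℝ → ℝ) (p q : ℝ) : ℝ :=
  Dt Ψ p q * Dt (Ds Ψ) p q - Ds Ψ p q * Dt (Dt Ψ) p q + p * Ψ p q * JF Ψ p q

/-- `π₂ = Ψ_sΨ_ss̄ − Ψ_s̄Ψ_ss + s̄ΨJ`. -/
def pi2F (Ψ : ℝ → ℝ → ℝ) (p q : ℝ) : ℝ :=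
  Ds Ψ p q * Dt (Ds Ψ) p q - Dt Ψ p q * Ds (Ds Ψ) p q + q * Ψ p q * JF Ψ p q


/-- Christoffel symbols `Γ^k_{ij}` of the Riemannian metric `a_{ij}(x)`. -/
def chr {n : ℕ} (a : (Fin n → ℝ) → Matrix (Fin n) (Fin n) ℝ) (x : Fin n → ℝ)
    (k i j : Fin n) : ℝ :=
  (1 / 2) * ∑ l, (a x)⁻¹ k l *
    (pd (fun z => a z j l) x i + pd (fun z => a z i l) x j - pd (fun z => a z i j) x l)

/-- Geodesic coefficients `^αG^i = ½ Γ^i_{jk} y^j y^k` of `α`. -/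
def alphaG {n : ℕ} (a : (Fin n → ℝ) → Matrix (Fin n) (Fin n) ℝ) (x y : Fin n → ℝ)
    (i : Fin n) : ℝ :=
  (1 / 2) * ∑ j, ∑ k, chr a x i j k * y j * y k

/-- Covariant derivative `v_{i|j}` of a 1-form `v` with respect to `α`. -/
def covD {n : ℕ} (a : (Fin n → ℝ) → Matrix (Fin n) (Fin n) ℝ)
    (v : (Fin n → ℝ) → Fin n → ℝ) (x : Fin n → ℝ) (i j : Fin n) : ℝ :=
  pd (fun z => v z i) x j - ∑ k, v x k * chr a x k i j

/-- `r_{ij} = ½(v_{i|j} + v_{j|i})`. -/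
def rSym {n : ℕ} (a : (Fin n → ℝ) → Matrix (Fin n) (Fin n) ℝ)
    (v : (Fin n → ℝ) → Fin n → ℝ) (x : Fin n → ℝ) (i j : Fin n) : ℝ :=
  (1 / 2) * (covD a v x i j + covD a v x j i)

/-- `s_{ij} = ½(v_{i|j} − v_{j|i})`. -/
def sSym {n : ℕ} (a : (Fin n → ℝ) → Matrix (Fin n) (Fin n) ℝ)
    (v : (Fin n → ℝ) → Fin n → ℝ) (x : Fin n → ℝ) (i j : Fin n) : ℝ :=
  (1 / 2) * (covD a v x i j - covD a v x j i)

/-- `r_{00} = r_{ij} y^i y^j`. -/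
def r00 {n : ℕ} (a : (Fin n → ℝ) → Matrix (Fin n) (Fin n) ℝ)
    (v : (Fin n → ℝ) → Fin n → ℝ) (x y : Fin n → ℝ) : ℝ :=
  ∑ i, ∑ j, rSym a v x i j * y i * y j

/-- `s_{j0} = s_{jk} y^k`. -/
def s0low {n : ℕ} (a : (Fin n → ℝ) → Matrix (Fin n) (Fin n) ℝ)
    (v : (Fin n → ℝ) → Fin n → ℝ) (x y : Fin n → ℝ) (j : Fin n) : ℝ :=
  ∑ k, sSym a v x j k * y k

/-- `s^i_0 = a^{ij} s_{j0}`. -/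
def sUp0 {n : ℕ} (a : (Fin n → ℝ) → Matrix (Fin n) (Fin n) ℝ)
    (v : (Fin n → ℝ) → Fin n → ℝ) (x y : Fin n → ℝ) (i : Fin n) : ℝ :=
  ∑ j, (a x)⁻¹ i j * s0low a v x y j

/-- Contraction `w_i · (s of v)^i_0`. -/
def contrS {n : ℕ} (a : (Fin n → ℝ) → Matrix (Fin n) (Fin n) ℝ)
    (v w : (Fin n → ℝ) → Fin n → ℝ) (x y : Fin n → ℝ) : ℝ :=
  ∑ i, w x i * sUp0 a v x y i

/-- Fundamental tensor of `F(x,·)` as a matrix. -/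
def gmatF {n : ℕ} (F : (Fin n → ℝ) → (Fin n → ℝ) → ℝ) (x y : Fin n → ℝ) :
    Matrix (Fin n) (Fin n) ℝ :=
  Matrix.of fun i j => fundT (F x) y i j

/-- Spray coefficients `G^i = ¼ g^{il}(∂g_{jl}/∂x^k + ∂g_{lk}/∂x^j − ∂g_{jk}/∂x^l) y^j y^k`. -/
def sprayF {n : ℕ} (F : (Fin n → ℝ) → (Fin n → ℝ) → ℝ) (x y : Fin n → ℝ) (i : Fin n) : ℝ :=
  (1 / 4) * ∑ l, (gmatF F x y)⁻¹ i l *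
    ∑ j, ∑ k, (pd (fun z => gmatF F z y j l) x k
        + pd (fun z => gmatF F z y l k) x j
        - pd (fun z => gmatF F z y j k) x l) * y j * y k


theorem alg_core (P Ps Pt Pss Pst Ptt al s t B G Th Rb Rg Pi J Ga : ℝ)
    (hPi : Pi = P - s*Ps - t*Pt) (hJ : J * Pi = Pss*Ptt - Pst^2)
    (hGa : Ga = Pi + (B-s^2)*Pss + (G-t^2)*Ptt + 2*(Th-s*t)*Pst + ((B-s^2)*(G-t^2)-(Th-s*t)^2)*J)
    (r0 rb0 r3 r1 rb1 p1 p2 G1 G2 G3 c1 c2 c3 u0 u1 u2 : ℝ)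
    (hal : al ≠ 0) (hP : P ≠ 0) (hGa0 : Ga ≠ 0)
    (hr0 : r0 = P*Pss+Ps^2) (hrb0 : rb0 = P*Ptt+Pt^2) (hr3 : r3 = P*Pst+Ps*Pt)
    (hr1 : r1 = P*Ps - s*r0 - t*r3) (hrb1 : rb1 = P*Pt-t*rb0-s*r3)
    (hp1 : p1 = Pt*Pst-Ps*Ptt+s*P*J) (hp2 : p2 = Ps*Pst-Pt*Pss+t*P*J)
    (hG1 : G1 = (Pss+(G-t^2)*J)*Rb+(Pst-(Th-s*t)*J)*Rg)
    (hG2 : G2 = (Ptt+(B-s^2)*J)*Rg+(Pst-(Th-s*t)*J)*Rb)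
    (hG3 : G3 = (r1+p2*(Th-s*t)-p1*(G-t^2))*Rb+(rb1-p2*(B-s^2)+p1*(Th-s*t))*Rg)
    (hc1 : c1 * (2*Ga) = G1) (hc2 : c2 * (2*Ga) = G2) (hc3 : c3 * (2*Ga*P*al) = G3)
    (hu0 : u0 = -(c1*(s*al)+c2*(t*al)+c3*al^2))
    (hu1 : u1 = Rb/2-(c1*B+c2*Th+c3*(s*al)))
    (hu2 : u2 = Rg/2-(c1*Th+c2*G+c3*(t*al))) :
    P*Pi*c1 = r1/al*u0+r0*u1+r3*u2 ∧ P*Pi*c2 = rb1/al*u0+r3*u1+rb0*u2 ∧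
    P*Pi*c3 = (-s*r1-t*rb1)/al^2*u0+r1/al*u1+rb1/al*u2 := by
  obtain ⟨b, hb⟩ : ∃ b, b = B - s^2 := ⟨_, rfl⟩
  obtain ⟨g, hg⟩ : ∃ b, b = G - t^2 := ⟨_, rfl⟩
  obtain ⟨th, hth⟩ : ∃ b, b = Th - s*t := ⟨_, rfl⟩
  obtain ⟨X, hX⟩ : ∃ X, X = Rb/2 - c1*b - c2*th := ⟨_, rfl⟩
  obtain ⟨Y, hY⟩ : ∃ X, X = Rg/2 - c1*th - c2*g := ⟨_, rfl⟩
  obtain ⟨m, hm⟩ : ∃ m, m = -(c1*s+c2*t+c3*al) := ⟨_, rfl⟩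
  rw [← hb, ← hg, ← hth] at hGa hG3
  rw [← hg, ← hth] at hG1
  rw [← hb, ← hth] at hG2
  have e0 : u0 = al * m := by rw [hu0, hm]; ring
  have e1 : u1 = X + s * m := by rw [hu1, hX, hm, hb, hth]; ring
  have e2 : u2 = Y + t * m := by rw [hu2, hY, hm, hg, hth]; ring
  have eX : X * (2*Ga) = Rb*(Pi+g*Ptt+th*Pst) - Rg*(Pst*b+Ptt*th) := by
    have : X * (2*Ga) = Rb*Ga - b*G1 - th*G2 := by rw [hX, ← hc1, ← hc2]; ring
    rw [this, hGa, hG1, hG2]; ring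
  have eY : Y * (2*Ga) = Rg*(Pi+b*Pss+th*Pst) - Rb*(Pst*g+Pss*th) := by
    have : Y * (2*Ga) = Rg*Ga - th*G1 - g*G2 := by rw [hY, ← hc1, ← hc2]; ring
    rw [this, hGa, hG1, hG2]; ring
  have em : m * (2*Ga*P) = -(s*P*G1+t*P*G2+G3) := by rw [hm, ← hc1, ← hc2, ← hc3]; ring
  have key1 : P*Pi*c1 = P*Ps*m + r0*X + r3*Y := by
    have h2 : (2*Ga*P) ≠ 0 := by positivity
    apply mul_right_cancel₀ h2
    have : P*Pi*c1*(2*Ga*P) - (P*Ps*m + r0*X + r3*Y)*(2*Ga*P)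
       = P^2*Pi*G1 - (P*Ps*(m*(2*Ga*P)) + r0*P*(X*(2*Ga)) + r3*P*(Y*(2*Ga))) := by
      rw [← hc1]; ring
    rw [← sub_eq_zero, this, em, eX, eY, hG1, hG2, hG3, hr1, hrb1, hp1, hp2, hr0, hrb0, hr3]
    have hJ' := hJ
    rw [hPi] at hJ' ⊢
    linear_combination (P^2*(g*Rb-th*Rg)) * hJ'
  have key2 : P*Pi*c2 = P*Pt*m + r3*X + rb0*Y := by
    have h2 : (2*Ga*P) ≠ 0 := by positivity
    apply mul_right_cancel₀ h2
    have : P*Pi*c2*(2*Ga*P) - (P*Pt*m + r3*X + rb0*Y)*(2*Ga*P)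
       = P^2*Pi*G2 - (P*Pt*(m*(2*Ga*P)) + r3*P*(X*(2*Ga)) + rb0*P*(Y*(2*Ga))) := by
      rw [← hc2]; ring
    rw [← sub_eq_zero, this, em, eX, eY, hG1, hG2, hG3, hr1, hrb1, hp1, hp2, hr0, hrb0, hr3]
    have hJ' := hJ
    rw [hPi] at hJ' ⊢
    linear_combination (P^2*(b*Rg-th*Rb)) * hJ'
  refine ⟨?_, ?_, ?_⟩
  · rw [key1, e0, e1, e2, hr1]; field_simp; ring
  · rw [key2, e0, e1, e2, hrb1]; field_simp; ring
  · have k3 : P*Pi*(c3*al) = r1*X+rb1*Y := by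
      have : c3*al = -m - c1*s - c2*t := by rw [hm]; ring
      rw [this]
      have : P*Pi*(-m-c1*s-c2*t) = -(P*Pi*m) - s*(P*Pi*c1) - t*(P*Pi*c2) := by ring
      rw [this, key1, key2, hr1, hrb1, hPi]
      have h2 : (2*Ga*P) ≠ 0 := by positivity
      apply mul_right_cancel₀ h2
      have : -(P*(P - s*Ps - t*Pt)*m) - s*(P*Ps*m+r0*X+r3*Y) - t*(P*Pt*m+r3*X+rb0*Y)
        = -P^2*m - (s*r0+t*r3)*X - (s*r3+t*rb0)*Y := by ring
      rw [this]
      rw [← sub_eq_zero]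
      have : ( -P^2*m - (s*r0+t*r3)*X - (s*r3+t*rb0)*Y) * (2*Ga*P) - ((P*Ps - s*r0 - t*r3)*X + (P*Pt-t*rb0-s*r3)*Y)*(2*Ga*P) = -P^2*(m*(2*Ga*P)) - P*Ps*P*(X*(2*Ga)) - P*Pt*P*(Y*(2*Ga)) := by ring
      rw [this, em, eX, eY, hG1, hG2, hG3, hr1, hrb1, hp1, hp2, hr0, hrb0, hr3, hPi]
      ring
    apply mul_right_cancel₀ hal
    have : P*Pi*c3*al = r1*X+rb1*Y := by rw [← k3]; ring
    rw [this, e0, e1, e2]; field_simp; ring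

/-- injectivity core -/
theorem inj_core (P Ps Pt Pss Pst Ptt al s t B G Th Pi J Ga : ℝ)
    (hPi : Pi = P - s*Ps - t*Pt) (hJ : J * Pi = Pss*Ptt - Pst^2)
    (hGa : Ga = Pi + (B-s^2)*Pss + (G-t^2)*Ptt + 2*(Th-s*t)*Pst + ((B-s^2)*(G-t^2)-(Th-s*t)^2)*J)
    (r0 rb0 r3 r1 rb1 u0 u1 u2 : ℝ)
    (hal : al ≠ 0) (hP : P ≠ 0) (hGa0 : Ga ≠ 0) (hPi0 : Pi ≠ 0)
    (hr0 : r0 = P*Pss+Ps^2) (hrb0 : rb0 = P*Ptt+Pt^2) (hr3 : r3 = P*Pst+Ps*Pt)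
    (hr1 : r1 = P*Ps - s*r0 - t*r3) (hrb1 : rb1 = P*Pt-t*rb0-s*r3)
    (k0 k1 k2 : ℝ) (hk0 : k0 = (-s*r1-t*rb1)/al^2*u0+r1/al*u1+rb1/al*u2)
    (hk1 : k1 = r1/al*u0+r0*u1+r3*u2) (hk2 : k2 = rb1/al*u0+r3*u1+rb0*u2)
    (h0 : P*Pi*u0 + k0*al^2 + k1*(s*al) + k2*(t*al) = 0)
    (h1 : P*Pi*u1 + k0*(s*al) + k1*B + k2*Th = 0)
    (h2 : P*Pi*u2 + k0*(t*al) + k1*Th + k2*G = 0) : u0 = 0 ∧ u1 = 0 ∧ u2 = 0 := by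
  obtain ⟨m, hm⟩ : ∃ m, u0 = al * m := ⟨u0/al, by field_simp⟩
  obtain ⟨X, hX⟩ : ∃ X, u1 = X + s*m := ⟨u1 - s*m, by ring⟩
  obtain ⟨Y, hY⟩ : ∃ Y, u2 = Y + t*m := ⟨u2 - t*m, by ring⟩
  have ek1 : k1 = P*Ps*m + r0*X + r3*Y := by rw [hk1, hm, hX, hY, hr1]; field_simp; ring
  have ek2 : k2 = P*Pt*m + r3*X + rb0*Y := by rw [hk2, hm, hX, hY, hrb1]; field_simp; ring
  have ek0 : k0*al = r1*X + rb1*Y := by rw [hk0, hm, hX, hY]; field_simp; ring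
  have f0 : P*m + Ps*X + Pt*Y = 0 := by
    apply mul_left_cancel₀ hP
    apply mul_left_cancel₀ hal
    have : P*Pi*(al*m) + al*(r1*X+rb1*Y) + k1*(s*al) + k2*(t*al) = 0 := by
      rw [← ek0, ← hm]; linear_combination h0
    rw [ek1, ek2, hPi, hr1, hrb1] at this
    linear_combination this
  have f1 : P*(Pi*X + (Pss*X+Pst*Y)*(B-s^2) + (Pst*X+Ptt*Y)*(Th-s*t)) = 0 := by
    have : P*Pi*u1 + s*(r1*X+rb1*Y) + k1*B + k2*Th = 0 := by rw [← ek0]; linear_combination h1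
    rw [ek1, ek2, hX, hPi, hr1, hrb1, hr0, hrb0, hr3] at this
    rw [hPi]
    linear_combination this - (s*(P-s*Ps-t*Pt) + Ps*B+Pt*Th) * f0
  have f2 : P*(Pi*Y + (Pss*X+Pst*Y)*(Th-s*t) + (Pst*X+Ptt*Y)*(G-t^2)) = 0 := by
    have : P*Pi*u2 + t*(r1*X+rb1*Y) + k1*Th + k2*G = 0 := by rw [← ek0]; linear_combination h2
    rw [ek1, ek2, hY, hPi, hr1, hrb1, hr0, hrb0, hr3] at this
    rw [hPi]
    linear_combination this - (t*(P-s*Ps-t*Pt) + Ps*Th+Pt*G) * f0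
  replace f1 := (mul_eq_zero.1 f1).resolve_left hP
  replace f2 := (mul_eq_zero.1 f2).resolve_left hP
  have hd : Pi * Ga ≠ 0 := mul_ne_zero hPi0 hGa0
  have gX : X = 0 := by
    have : Pi*Ga*X = 0 := by
      rw [hGa]
      linear_combination (Pi + Pst*(Th-s*t)+Ptt*(G-t^2))*f1 - (Pst*(B-s^2)+Ptt*(Th-s*t))*f2
        + X*((B-s^2)*(G-t^2)-(Th-s*t)^2)*hJ
    exact (mul_eq_zero.1 this).resolve_left hd
  have gY : Y = 0 := by
    have : Pi*Ga*Y = 0 := by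
      rw [hGa]
      linear_combination (Pi + Pst*(Th-s*t)+Pss*(B-s^2))*f2 - (Pst*(G-t^2)+Pss*(Th-s*t))*f1
        + Y*((B-s^2)*(G-t^2)-(Th-s*t)^2)*hJ
    exact (mul_eq_zero.1 this).resolve_left hd
  have gm : m = 0 := by
    rw [gX, gY] at f0
    simpa [hP] using f0
  simp [hm, hX, hY, gm, gX, gY]
set_option linter.unusedSimpArgs false
section psi
variable {D : Set (ℝ × ℝ)} {f : ℝ → ℝ → ℝ}

theorem psi_pair (hD : IsOpen D) (hf : ContDiffOn ℝ (⊤ : ℕ∞) (fun p : ℝ × ℝ => f p.1 p.2) D)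
    {p : ℝ × ℝ} (hp : p ∈ D) :
    Ds f p.1 p.2 = fderiv ℝ (fun p : ℝ × ℝ => f p.1 p.2) p (1, 0) ∧
    Dt f p.1 p.2 = fderiv ℝ (fun p : ℝ × ℝ => f p.1 p.2) p (0, 1) := by
  have hd : HasFDerivAt (fun p : ℝ × ℝ => f p.1 p.2)
      (fderiv ℝ (fun p : ℝ × ℝ => f p.1 p.2) p) p :=
    ((hf.contDiffAt (hD.mem_nhds hp)).differentiableAt (by simp)).hasFDerivAt
  constructor
  · have h1 : HasDerivAt (fun u : ℝ => ((u, p.2) : ℝ × ℝ)) (1, 0) p.1 :=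
      (hasDerivAt_id _).prodMk (hasDerivAt_const _ _)
    exact (HasFDerivAt.comp_hasDerivAt (x := p.1) (f := fun u : ℝ => ((u, p.2) : ℝ × ℝ)) hd h1).deriv
  · have h1 : HasDerivAt (fun u : ℝ => ((p.1, u) : ℝ × ℝ)) (0, 1) p.2 :=
      (hasDerivAt_const _ _).prodMk (hasDerivAt_id _)
    exact (HasFDerivAt.comp_hasDerivAt (x := p.2) (f := fun u : ℝ => ((p.1, u) : ℝ × ℝ)) hd h1).deriv

theorem psi_hasF (hD : IsOpen D) (hf : ContDiffOn ℝ (⊤ : ℕ∞) (fun p : ℝ × ℝ => f p.1 p.2) D)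
    {p : ℝ × ℝ} (hp : p ∈ D) :
    HasFDerivAt (fun p : ℝ × ℝ => f p.1 p.2)
      (Ds f p.1 p.2 • ContinuousLinearMap.fst ℝ ℝ ℝ
        + Dt f p.1 p.2 • ContinuousLinearMap.snd ℝ ℝ ℝ) p := by
  have hd : HasFDerivAt (fun p : ℝ × ℝ => f p.1 p.2)
      (fderiv ℝ (fun p : ℝ × ℝ => f p.1 p.2) p) p :=
    ((hf.contDiffAt (hD.mem_nhds hp)).differentiableAt (by simp)).hasFDerivAt
  refine hd.congr_fderiv ?_
  obtain ⟨h1, h2⟩ := psi_pair hD hf hp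
  rw [h1, h2]
  ext <;> simp

theorem psi_cd (hD : IsOpen D) (hf : ContDiffOn ℝ (⊤ : ℕ∞) (fun p : ℝ × ℝ => f p.1 p.2) D) :
    ContDiffOn ℝ (⊤ : ℕ∞) (fun p : ℝ × ℝ => Ds f p.1 p.2) D ∧
    ContDiffOn ℝ (⊤ : ℕ∞) (fun p : ℝ × ℝ => Dt f p.1 p.2) D := by
  have h := hf.fderiv_of_isOpen (m := ((⊤ : ℕ∞) : WithTop ℕ∞)) hD (by simp)
  constructor
  · refine (h.clm_apply (contDiffOn_const (c := ((1, 0) : ℝ × ℝ)))).congr ?_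
    intro p hp
    exact (psi_pair hD hf hp).1
  · refine (h.clm_apply (contDiffOn_const (c := ((0, 1) : ℝ × ℝ)))).congr ?_
    intro p hp
    exact (psi_pair hD hf hp).2

theorem psi_symm (hD : IsOpen D) (hf : ContDiffOn ℝ (⊤ : ℕ∞) (fun p : ℝ × ℝ => f p.1 p.2) D)
    {p : ℝ × ℝ} (hp : p ∈ D) : Ds (Dt f) p.1 p.2 = Dt (Ds f) p.1 p.2 := by
  have hs : IsSymmSndFDerivAt ℝ (fun p : ℝ × ℝ => f p.1 p.2) p :=
    (hf.contDiffAt (hD.mem_nhds hp)).isSymmSndFDerivAt (by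
      rw [minSmoothness_of_isRCLikeNormedField]; exact WithTop.coe_le_coe.2 (le_top : (2 : ℕ∞) ≤ ⊤))
  have h := hf.fderiv_of_isOpen (m := ((⊤ : ℕ∞) : WithTop ℕ∞)) hD (by simp)
  have hd : DifferentiableAt ℝ (fderiv ℝ (fun p : ℝ × ℝ => f p.1 p.2)) p :=
    (h.contDiffAt (hD.mem_nhds hp)).differentiableAt (by simp)
  have e1 : (fun q : ℝ × ℝ => Dt f q.1 q.2) =ᶠ[nhds p]
      fun q => fderiv ℝ (fun p : ℝ × ℝ => f p.1 p.2) q (0, 1) := by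
    filter_upwards [hD.mem_nhds hp] with q hq using (psi_pair hD hf hq).2
  have e2 : (fun q : ℝ × ℝ => Ds f q.1 q.2) =ᶠ[nhds p]
      fun q => fderiv ℝ (fun p : ℝ × ℝ => f p.1 p.2) q (1, 0) := by
    filter_upwards [hD.mem_nhds hp] with q hq using (psi_pair hD hf hq).1
  rw [(psi_pair hD (psi_cd hD hf).2 hp).1, (psi_pair hD (psi_cd hD hf).1 hp).2, e1.fderiv_eq,
    e2.fderiv_eq, fderiv_clm_apply hd (by fun_prop), fderiv_clm_apply hd (by fun_prop)]
  simpa using hs (1, 0) (0, 1)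

end psi

section chain
variable {E : Type*} [NormedAddCommGroup E] [NormedSpace ℝ E]
variable {D : Set (ℝ × ℝ)} {f : ℝ → ℝ → ℝ} {A β γ : E → ℝ} {A' β' γ' : E →L[ℝ] ℝ} {z : E}

theorem s_deriv (hA : HasFDerivAt A A' z) (hβ : HasFDerivAt β β' z) (hpos : 0 < A z) :
    HasFDerivAt (fun w => β w / √(A w))
      ((1 / √(A z)) • β' - (β z / √(A z) / (2 * A z)) • A') z := by
  have hs := hA.sqrt hpos.ne'
  have h0 : √(A z) ≠ 0 := (Real.sqrt_pos.2 hpos).ne'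
  have hsq : √(A z) ^ 2 = A z := Real.sq_sqrt hpos.le
  simp only [div_eq_mul_inv (β _)]
  have h := hβ.fun_mul ((hasDerivAt_inv h0).comp_hasFDerivAt z hs)
  refine h.congr_fderiv ?_
  ext v
  simp only [smul_apply, sub_apply, add_apply, neg_apply, smul_eq_mul, Function.comp_apply]
  generalize √(A z) = r at *
  rw [← hsq]
  field_simp
  ring

theorem comp_deriv (hD : IsOpen D) (hf : ContDiffOn ℝ (⊤ : ℕ∞) (fun p : ℝ × ℝ => f p.1 p.2) D)
    (hA : HasFDerivAt A A' z) (hβ : HasFDerivAt β β' z) (hγ : HasFDerivAt γ γ' z) (hpos : 0 < A z)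
    {s t : ℝ} (hs : s = β z / √(A z)) (ht : t = γ z / √(A z)) (hm : (s, t) ∈ D) :
    HasFDerivAt (fun w => f (β w / √(A w)) (γ w / √(A w)))
      ((Ds f s t) • ((1 / √(A z)) • β' - (s / (2 * A z)) • A')
        + (Dt f s t) • ((1 / √(A z)) • γ' - (t / (2 * A z)) • A')) z := by
  subst hs ht
  have h := (psi_hasF hD hf hm).comp z ((s_deriv hA hβ hpos).prodMk (s_deriv hA hγ hpos))
  refine h.congr_fderiv ?_
  ext v
  simp

variable {Ψ : ℝ → ℝ → ℝ}

theorem chain_all (hD : IsOpen D)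
    (hf : ContDiffOn ℝ (⊤ : ℕ∞) (fun p : ℝ × ℝ => Ψ p.1 p.2) D)
    (hA : HasFDerivAt A A' z) (hβ : HasFDerivAt β β' z) (hγ : HasFDerivAt γ γ' z) (hpos : 0 < A z)
    {s t al : ℝ} (hs : s = β z / √(A z)) (ht : t = γ z / √(A z)) (hal : al = √(A z))
    (hm : (s, t) ∈ D) :
    HasFDerivAt (fun w => (√(A w) * Ψ (β w / √(A w)) (γ w / √(A w))) ^ 2)
      (rhoF Ψ s t • A' + (2 * (al * (Ψ s t * Ds Ψ s t))) • β'
        + (2 * (al * (Ψ s t * Dt Ψ s t))) • γ') z ∧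
    HasFDerivAt (fun w => rhoF Ψ (β w / √(A w)) (γ w / √(A w)))
      (((-s * rho1F Ψ s t - t * rhobar1F Ψ s t) / al ^ 2 / 2) • A' + (rho1F Ψ s t / al) • β'
        + (rhobar1F Ψ s t / al) • γ') z ∧
    HasFDerivAt (fun w => √(A w) * (Ψ (β w / √(A w)) (γ w / √(A w)) *
        Ds Ψ (β w / √(A w)) (γ w / √(A w))))
      ((rho1F Ψ s t / al / 2) • A' + rho0F Ψ s t • β' + rho3F Ψ s t • γ') z ∧
    HasFDerivAt (fun w => √(A w) * (Ψ (β w / √(A w)) (γ w / √(A w)) *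
        Dt Ψ (β w / √(A w)) (γ w / √(A w))))
      ((rhobar1F Ψ s t / al / 2) • A' + rho3F Ψ s t • β' + rhobar0F Ψ s t • γ') z := by
  have hsy := psi_symm hD hf hm
  have hsd := s_deriv hA hβ hpos
  have htd := s_deriv hA hγ hpos
  have h0 := comp_deriv hD hf hA hβ hγ hpos hs ht hm
  have h1 := comp_deriv hD (psi_cd hD hf).1 hA hβ hγ hpos hs ht hm
  have h2 := comp_deriv hD (psi_cd hD hf).2 hA hβ hγ hpos hs ht hm
  have hq := hA.sqrt hpos.ne'
  have hal0 : 0 < al := by rw [hal]; exact Real.sqrt_pos.2 hpos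
  have hsq : A z = al ^ 2 := by rw [hal]; exact (Real.sq_sqrt hpos.le).symm
  dsimp only at hsy
  have hs' : β z / al = s := by rw [hs, hal]
  have ht' : γ z / al = t := by rw [ht, hal]
  refine ⟨?_, ?_, ?_, ?_⟩
  · simp only [pow_two (_ * _)]
    refine ((hq.fun_mul h0).fun_mul (hq.fun_mul h0)).congr_fderiv ?_
    ext v
    simp only [smul_apply, sub_apply,
      add_apply, smul_eq_mul, rhoF, PiF]
    simp only [← hal]
    simp only [hs', ht', hsq]
    field_simp
    ring
  · refine (h0.fun_mul ((h0.fun_sub (hsd.fun_mul h1)).fun_sub (htd.fun_mul h2))).congr_fderiv ?_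
    ext v
    simp only [smul_apply, sub_apply,
      add_apply, smul_eq_mul, hsy, rho1F, rhobar1F, rho0F, rhobar0F, rho3F]
    simp only [← hal]
    simp only [hs', ht', hsq]
    field_simp
    ring
  · refine (hq.fun_mul (h0.fun_mul h1)).congr_fderiv ?_
    ext v
    simp only [smul_apply, sub_apply,
      add_apply, smul_eq_mul, hsy, rho1F, rhobar1F, rho0F, rhobar0F, rho3F]
    simp only [← hal]
    simp only [hs', ht', hsq]
    field_simp
    ring
  · refine (hq.fun_mul (h0.fun_mul h2)).congr_fderiv ?_
    ext v
    simp only [smul_apply, sub_apply,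
      add_apply, smul_eq_mul, hsy, rho1F, rhobar1F, rho0F, rhobar0F, rho3F]
    simp only [← hal]
    simp only [hs', ht', hsq]
    field_simp
    ring

end chain

open Matrix in
/-- `M_l = F F_{y^l}` in explicit form. -/
def Mm {n : ℕ} (a : Matrix (Fin n) (Fin n) ℝ) (b g : Fin n → ℝ) (Ψ : ℝ → ℝ → ℝ) (y : Fin n → ℝ)
    (l : Fin n) : ℝ :=
  rhoF Ψ (sVar a b y) (sVar a g y) * (a *ᵥ y) l
    + (alph a y * (Ψ (sVar a b y) (sVar a g y) * Ds Ψ (sVar a b y) (sVar a g y))) * b l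
    + (alph a y * (Ψ (sVar a b y) (sVar a g y) * Dt Ψ (sVar a b y) (sVar a g y))) * g l

/-- explicit bilinear expression for the fundamental tensor -/
def gForm (rho r0 rb0 r3 r1 rb1 al s t : ℝ) (aij ayi ayj bi bj gi gj : ℝ) : ℝ :=
  rho * aij + ((-s * r1 - t * rb1) / al ^ 2 * ayi + r1 / al * bi + rb1 / al * gi) * ayj
    + (r1 / al * ayi + r0 * bi + r3 * gi) * bj + (rb1 / al * ayi + r3 * bi + rb0 * gi) * gj

open Matrix in
def gExp {n : ℕ} (a : Matrix (Fin n) (Fin n) ℝ) (b g : Fin n → ℝ) (Ψ : ℝ → ℝ → ℝ) (y : Fin n → ℝ)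
    (i j : Fin n) : ℝ :=
  gForm (rhoF Ψ (sVar a b y) (sVar a g y)) (rho0F Ψ (sVar a b y) (sVar a g y))
    (rhobar0F Ψ (sVar a b y) (sVar a g y)) (rho3F Ψ (sVar a b y) (sVar a g y))
    (rho1F Ψ (sVar a b y) (sVar a g y)) (rhobar1F Ψ (sVar a b y) (sVar a g y))
    (alph a y) (sVar a b y) (sVar a g y) (a i j) ((a *ᵥ y) i) ((a *ᵥ y) j) (b i) (b j) (g i) (g j)

section generic
variable {n : ℕ}

theorem pd_of {f : (Fin n → ℝ) → ℝ} {f' : (Fin n → ℝ) →L[ℝ] ℝ} {y : Fin n → ℝ}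
    (h : HasFDerivAt f f' y) (i : Fin n) : pd f y i = f' (Pi.single i 1) := by
  rw [pd, h.fderiv]

theorem pd_congr {f g : (Fin n → ℝ) → ℝ} {y : Fin n → ℝ} (h : f =ᶠ[nhds y] g) (i : Fin n) :
    pd f y i = pd g y i := by
  rw [pd, pd, h.fderiv_eq]

theorem pd_sum_mul {ι : Type*} [Fintype ι] {f : ι → (Fin n → ℝ) → ℝ} {x : Fin n → ℝ}
    (hf : ∀ j, DifferentiableAt ℝ (f j) x) (c : ι → ℝ) (k : Fin n) :
    pd (fun z => ∑ j, f j z * c j) x k = ∑ j, pd (f j) x k * c j := by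
  have h : HasFDerivAt (fun z => ∑ j, f j z * c j) (∑ j, c j • fderiv ℝ (f j) x) x :=
    HasFDerivAt.fun_sum fun j _ => (hf j).hasFDerivAt.mul_const (c j)
  rw [pd_of h]
  simp [pd, mul_comm, _root_.sum_apply]

theorem pd_mul {f g : (Fin n → ℝ) → ℝ} {x : Fin n → ℝ}
    (hf : DifferentiableAt ℝ f x) (hg : DifferentiableAt ℝ g x) (k : Fin n) :
    pd (fun z => f z * g z) x k = pd f x k * g x + f x * pd g x k := by
  rw [pd_of (hf.hasFDerivAt.fun_mul hg.hasFDerivAt)]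
  simp [pd]
  ring

theorem pd_add {f g : (Fin n → ℝ) → ℝ} {x : Fin n → ℝ}
    (hf : DifferentiableAt ℝ f x) (hg : DifferentiableAt ℝ g x) (k : Fin n) :
    pd (fun z => f z + g z) x k = pd f x k + pd g x k := by
  rw [pd_of (hf.hasFDerivAt.fun_add hg.hasFDerivAt)]
  simp [pd]

theorem EL_generic {gg : (Fin n → ℝ) → Fin n → Fin n → ℝ} {M : (Fin n → ℝ) → Fin n → ℝ}
    {N : (Fin n → ℝ) → ℝ} {x y : Fin n → ℝ}
    (hd : ∀ i j, DifferentiableAt ℝ (fun z => gg z i j) x)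
    (hs : ∀ᶠ z in nhds x, ∀ i j, gg z i j = gg z j i)
    (hM : ∀ᶠ z in nhds x, ∀ l, ∑ j, gg z j l * y j = M z l)
    (hN : ∀ᶠ z in nhds x, ∑ l, M z l * y l = N z) (l : Fin n) :
    ∑ j, ∑ k, (pd (fun z => gg z j l) x k + pd (fun z => gg z l k) x j
      - pd (fun z => gg z j k) x l) * y j * y k
    = 2 * ∑ k, pd (fun z => M z l) x k * y k - pd N x l := by
  have e1 : ∀ l k, pd (fun z => M z l) x k = ∑ j, pd (fun z => gg z j l) x k * y j := by
    intro l k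
    rw [← pd_sum_mul (fun j => hd j l)]
    apply pd_congr
    filter_upwards [hM] with z hz using (hz l).symm
  have hdM : ∀ l, DifferentiableAt ℝ (fun z => M z l) x := by
    intro l
    have : DifferentiableAt ℝ (fun z => ∑ j, gg z j l * y j) x :=
      DifferentiableAt.fun_sum fun j _ => (hd j l).mul_const _
    refine this.congr_of_eventuallyEq ?_
    filter_upwards [hM] with z hz using (hz l).symm
  have e2 : pd N x l = ∑ k, ∑ j, pd (fun z => gg z j k) x l * y j * y k := by
    have : pd N x l = ∑ k, pd (fun z => M z k) x l * y k := by
      rw [← pd_sum_mul hdM]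
      apply pd_congr
      filter_upwards [hN] with z hz using hz.symm
    rw [this]
    simp_rw [e1, Finset.sum_mul]
  have e3 : ∀ i j k, pd (fun z => gg z i j) x k = pd (fun z => gg z j i) x k := by
    intro i j k
    apply pd_congr
    filter_upwards [hs] with z hz using hz i j
  rw [e2]
  simp_rw [e1, sub_mul, add_mul, Finset.sum_sub_distrib, Finset.sum_add_distrib, Finset.sum_mul]
  have f1 : ∑ j, ∑ k, pd (fun z => gg z j l) x k * y j * y k
      = ∑ k, ∑ j, pd (fun z => gg z j l) x k * y j * y k := Finset.sum_comm
  have f2 : ∑ j, ∑ k, pd (fun z => gg z l k) x j * y j * y k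
      = ∑ k, ∑ j, pd (fun z => gg z j l) x k * y j * y k := by
    refine Finset.sum_congr rfl fun j _ => Finset.sum_congr rfl fun k _ => ?_
    rw [e3 l k]; ring
  have f3 : ∑ j, ∑ k, pd (fun z => gg z j k) x l * y j * y k
      = ∑ k, ∑ j, pd (fun z => gg z j k) x l * y j * y k := Finset.sum_comm
  rw [f1, f2, f3]; ring

end generic

section linalg
open Matrix
variable {n : ℕ} {a : Matrix (Fin n) (Fin n) ℝ}

theorem Qd_eq (a : Matrix (Fin n) (Fin n) ℝ) (y : Fin n → ℝ) :
    ∑ i, ∑ j, a i j * y i * y j = y ⬝ᵥ (a *ᵥ y) := by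
  simp only [dotProduct, mulVec, Finset.mul_sum]
  refine Finset.sum_congr rfl fun j _ => Finset.sum_congr rfl fun k _ => ?_
  ring

theorem quadInv_eq (a : Matrix (Fin n) (Fin n) ℝ) (u v : Fin n → ℝ) :
    quadInv a u v = u ⬝ᵥ (a⁻¹ *ᵥ v) := by
  simp only [quadInv, dotProduct, mulVec, Finset.mul_sum]
  refine Finset.sum_congr rfl fun j _ => Finset.sum_congr rfl fun k _ => ?_
  ring

theorem Qd_pos (ha : a.PosDef) {y : Fin n → ℝ} (hy : y ≠ 0) : 0 < ∑ i, ∑ j, a i j * y i * y j := by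
  rw [Qd_eq]
  simpa using ha.dotProduct_mulVec_pos hy

theorem posDef_symm (ha : a.PosDef) (i j : Fin n) : a i j = a j i := by
  have := ha.isHermitian.apply i j
  simpa using this.symm

theorem symm_dot (ha : a.PosDef) (u v : Fin n → ℝ) : u ⬝ᵥ (a *ᵥ v) = (a *ᵥ u) ⬝ᵥ v := by
  rw [dotProduct_mulVec, ← mulVec_transpose]
  congr 2
  ext i j
  exact posDef_symm ha j i

theorem mul_inv_mulVec (ha : a.PosDef) (v : Fin n → ℝ) : a *ᵥ (a⁻¹ *ᵥ v) = v := by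
  rw [mulVec_mulVec, mul_nonsing_inv _ ((isUnit_iff_isUnit_det _).1 ha.isUnit), one_mulVec]

theorem cs (ha : a.PosDef) {y : Fin n → ℝ} (hy : y ≠ 0) (b : Fin n → ℝ) :
    (b ⬝ᵥ y) ^ 2 ≤ quadInv a b b * (y ⬝ᵥ (a *ᵥ y)) := by
  rw [quadInv_eq]
  set w := a⁻¹ *ᵥ b with hw
  have haw : a *ᵥ w = b := mul_inv_mulVec ha b
  have hQ : 0 < y ⬝ᵥ (a *ᵥ y) := by rw [← Qd_eq]; exact Qd_pos ha hy
  set Q := y ⬝ᵥ (a *ᵥ y) with hQd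
  set β := b ⬝ᵥ y with hβ
  have h : 0 ≤ (Q • w - β • y) ⬝ᵥ (a *ᵥ (Q • w - β • y)) := by
    simpa using ha.posSemidef.dotProduct_mulVec_nonneg (Q • w - β • y)
  have h1 : w ⬝ᵥ (a *ᵥ y) = β := by rw [symm_dot ha, haw]
  have h2 : y ⬝ᵥ b = β := dotProduct_comm _ _
  have h3 : w ⬝ᵥ b = b ⬝ᵥ w := dotProduct_comm _ _
  simp only [mulVec_sub, mulVec_smul, haw, sub_dotProduct, dotProduct_sub, smul_dotProduct,
    dotProduct_smul, smul_eq_mul, h1, h2, h3, ← hQd] at h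
  have : 0 ≤ Q * (b ⬝ᵥ w * Q - β ^ 2) := by linarith
  have := nonneg_of_mul_nonneg_right this hQ
  linarith

theorem sVar_mem (ha : a.PosDef) {y : Fin n → ℝ} (hy : y ≠ 0) (b : Fin n → ℝ) {b₀ : ℝ}
    (h : √(quadInv a b b) < b₀) : sVar a b y ∈ Set.Ioo (-b₀) b₀ := by
  have hQ := Qd_pos ha hy
  have hal : 0 < alph a y := Real.sqrt_pos.2 hQ
  have hal2 : alph a y ^ 2 = y ⬝ᵥ (a *ᵥ y) := by rw [← Qd_eq]; exact Real.sq_sqrt hQ.le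
  have hc := cs ha hy b
  rw [Set.mem_Ioo, ← abs_lt]
  refine lt_of_le_of_lt ?_ h
  apply Real.le_sqrt_of_sq_le
  rw [sq_abs, sVar, div_pow, hal2, div_le_iff₀ (by rw [← hal2]; positivity)]
  exact hc

end linalg

section vertical
open Matrix
variable {n : ℕ} {a : Matrix (Fin n) (Fin n) ℝ} {b g : Fin n → ℝ}
variable {D : Set (ℝ × ℝ)} {Ψ : ℝ → ℝ → ℝ}

/-- covector as a continuous linear map -/
def covec (v : Fin n → ℝ) : (Fin n → ℝ) →L[ℝ] ℝ :=
  ∑ i, v i • ContinuousLinearMap.proj (R := ℝ) (φ := fun _ : Fin n => ℝ) i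

theorem covec_apply (v w : Fin n → ℝ) : covec v w = ∑ i, v i * w i := by
  simp [covec, _root_.sum_apply]

theorem covec_single (v : Fin n → ℝ) (i : Fin n) : covec v (Pi.single i 1) = v i := by
  simp [covec_apply, Pi.single_apply]

theorem oneForm_deriv (v y : Fin n → ℝ) : HasFDerivAt (oneForm v) (covec v) y := by
  have : oneForm v = covec v := by ext w; rw [covec_apply]; rfl
  rw [this]; exact (covec v).hasFDerivAt

theorem mulVec_deriv (a : Matrix (Fin n) (Fin n) ℝ) (y : Fin n → ℝ) (l : Fin n) :
    HasFDerivAt (fun w => (a *ᵥ w) l) (covec (fun j => a l j)) y :=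
  oneForm_deriv (fun j => a l j) y

theorem Qd_deriv (ha : a.PosDef) (y : Fin n → ℝ) :
    HasFDerivAt (fun w : Fin n → ℝ => ∑ i, ∑ j, a i j * w i * w j)
      ((2 : ℝ) • covec (a *ᵥ y)) y := by
  have h : HasFDerivAt (fun w : Fin n → ℝ => ∑ i, w i * (a *ᵥ w) i)
      (∑ i, (y i • covec (fun j => a i j) + (a *ᵥ y) i • ContinuousLinearMap.proj (R := ℝ)
        (φ := fun _ : Fin n => ℝ) i)) y :=
    HasFDerivAt.fun_sum fun i _ => (hasFDerivAt_apply i y).fun_mul (mulVec_deriv a y i)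
  have e : (fun w : Fin n → ℝ => ∑ i, ∑ j, a i j * w i * w j) = fun w => ∑ i, w i * (a *ᵥ w) i := by
    ext w; exact Qd_eq a w
  rw [e]
  refine h.congr_fderiv ?_
  ext1 v
  have h1 : ∑ i, y i * (a *ᵥ v) i = ∑ i, (a *ᵥ y) i * v i := symm_dot ha y v
  simp only [_root_.sum_apply, _root_.add_apply, _root_.smul_apply, covec_apply, smul_eq_mul,
    ContinuousLinearMap.proj_apply, Finset.sum_add_distrib]
  have h2 : ∑ i, y i * ∑ j, a i j * v j = ∑ i, y i * (a *ᵥ v) i := rfl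
  rw [h2, h1]; ring

theorem vert1 (hD : IsOpen D) (hf : ContDiffOn ℝ (⊤ : ℕ∞) (fun p : ℝ × ℝ => Ψ p.1 p.2) D)
    (ha : a.PosDef) {y : Fin n → ℝ} (hy : y ≠ 0) (hm : (sVar a b y, sVar a g y) ∈ D) (l : Fin n) :
    pd (fun z => Fm a b g Ψ z ^ 2) y l = 2 * Mm a b g Ψ y l := by
  have h := (chain_all hD hf (Qd_deriv ha y) (oneForm_deriv b y) (oneForm_deriv g y)
    (Qd_pos ha hy) (s := sVar a b y) (t := sVar a g y) (al := alph a y) rfl rfl rfl hm).1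
  have h' : HasFDerivAt (fun z => Fm a b g Ψ z ^ 2) _ y := h
  rw [pd_of h']
  simp only [_root_.add_apply, _root_.smul_apply, covec_single, smul_eq_mul, Mm]
  ring

theorem vert2 (hD : IsOpen D) (hf : ContDiffOn ℝ (⊤ : ℕ∞) (fun p : ℝ × ℝ => Ψ p.1 p.2) D)
    (ha : a.PosDef) {y : Fin n → ℝ} (hy : y ≠ 0)
    (hm : ∀ y : Fin n → ℝ, y ≠ 0 → (sVar a b y, sVar a g y) ∈ D) (i j : Fin n) :
    fundT (Fm a b g Ψ) y i j = gExp a b g Ψ y i j := by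
  obtain ⟨-, h1, h2, h3⟩ := chain_all hD hf (Qd_deriv ha y) (oneForm_deriv b y) (oneForm_deriv g y)
    (Qd_pos ha hy) (s := sVar a b y) (t := sVar a g y) (al := alph a y) rfl rfl rfl (hm y hy)
  have hM : HasFDerivAt (fun z => 2 * Mm a b g Ψ z j) _ y :=
    (((h1.fun_mul (mulVec_deriv a y j)).fun_add (h2.mul_const (b j))).fun_add
      (h3.mul_const (g j))).const_mul 2
  have e : (fun z => pd (fun z => Fm a b g Ψ z ^ 2) z j) =ᶠ[nhds y]
      fun z => 2 * Mm a b g Ψ z j := by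
    filter_upwards [isOpen_ne.mem_nhds hy] with z hz using vert1 hD hf ha hz (hm z hz) j
  rw [fundT, pd2, pd_congr e, pd_of hM]
  simp only [_root_.add_apply, _root_.smul_apply, covec_single, smul_eq_mul, gExp, gForm, posDef_symm ha j i]
  change 1 / 2 * (2 * (rhoF Ψ (sVar a b y) (sVar a g y) * _ + _ + _ + _)) = _
  ring

theorem gExp_symm (ha : a.PosDef) (y : Fin n → ℝ) (i j : Fin n) :
    gExp a b g Ψ y i j = gExp a b g Ψ y j i := by
  simp only [gExp, gForm, posDef_symm ha j i]
  ring

theorem gExp_sum (ha : a.PosDef) (y w : Fin n → ℝ) (l : Fin n) {rho r0 rb0 r3 r1 rb1 al s t : ℝ}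
    (hs : s = sVar a b y) (ht : t = sVar a g y) (hal : al = alph a y)
    (hrho : rho = rhoF Ψ s t) (hr0 : r0 = rho0F Ψ s t) (hrb0 : rb0 = rhobar0F Ψ s t)
    (hr3 : r3 = rho3F Ψ s t) (hr1 : r1 = rho1F Ψ s t) (hrb1 : rb1 = rhobar1F Ψ s t) :
    ∑ i, gExp a b g Ψ y i l * w i = rho * (a *ᵥ w) l
      + ((-s * r1 - t * rb1) / al ^ 2 * ((a *ᵥ y) ⬝ᵥ w) + r1 / al * (b ⬝ᵥ w)
          + rb1 / al * (g ⬝ᵥ w)) * (a *ᵥ y) l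
      + (r1 / al * ((a *ᵥ y) ⬝ᵥ w) + r0 * (b ⬝ᵥ w) + r3 * (g ⬝ᵥ w)) * b l
      + (rb1 / al * ((a *ᵥ y) ⬝ᵥ w) + r3 * (b ⬝ᵥ w) + rb0 * (g ⬝ᵥ w)) * g l := by
  have e : (a *ᵥ w) l = ∑ i, a i l * w i := by
    change ∑ i, a l i * w i = _
    exact Finset.sum_congr rfl fun i _ => by rw [posDef_symm ha l i]
  rw [e]
  simp only [gExp, ← hs, ← ht, ← hal, ← hrho, ← hr0, ← hrb0, ← hr3, ← hr1, ← hrb1]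
  generalize (a *ᵥ y) = ay
  simp only [dotProduct, gForm, Finset.mul_sum, Finset.sum_mul, ← Finset.sum_add_distrib]
  refine Finset.sum_congr rfl fun i _ => ?_
  ring

theorem gExp_y (ha : a.PosDef) {y : Fin n → ℝ} (hy : y ≠ 0) (l : Fin n) :
    ∑ i, gExp a b g Ψ y i l * y i = Mm a b g Ψ y l := by
  have hQ := Qd_pos ha hy
  have hal : 0 < alph a y := Real.sqrt_pos.2 hQ
  have hal2 : (a *ᵥ y) ⬝ᵥ y = alph a y ^ 2 := by
    rw [dotProduct_comm, ← Qd_eq]; exact (Real.sq_sqrt hQ.le).symm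
  have hb : b ⬝ᵥ y = sVar a b y * alph a y := (div_mul_cancel₀ _ hal.ne').symm
  have hg : g ⬝ᵥ y = sVar a g y * alph a y := (div_mul_cancel₀ _ hal.ne').symm
  rw [gExp_sum ha y y l rfl rfl rfl rfl rfl rfl rfl rfl rfl, hal2, hb, hg, Mm]
  simp only [rho1F, rhobar1F]
  field_simp
  ring

theorem Mm_y (ha : a.PosDef) {y : Fin n → ℝ} (hy : y ≠ 0) :
    ∑ l, Mm a b g Ψ y l * y l = Fm a b g Ψ y ^ 2 := by
  have hQ := Qd_pos ha hy
  have hal : 0 < alph a y := Real.sqrt_pos.2 hQ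
  have hal2 : (a *ᵥ y) ⬝ᵥ y = alph a y ^ 2 := by
    rw [dotProduct_comm, ← Qd_eq]; exact (Real.sq_sqrt hQ.le).symm
  have hb : b ⬝ᵥ y = sVar a b y * alph a y := (div_mul_cancel₀ _ hal.ne').symm
  have hg : g ⬝ᵥ y = sVar a g y * alph a y := (div_mul_cancel₀ _ hal.ne').symm
  simp only [Mm, add_mul, Finset.sum_add_distrib, mul_assoc, ← Finset.mul_sum]
  change _ * ((a *ᵥ y) ⬝ᵥ y) + _ * (_ * (_ * (b ⬝ᵥ y))) + _ * (_ * (_ * (g ⬝ᵥ y))) = _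
  rw [hal2, hb, hg, Fm, rhoF, PiF]
  ring

end vertical

section rhocd
variable {D : Set (ℝ × ℝ)} {Ψ : ℝ → ℝ → ℝ}

theorem rho_cd (hD : IsOpen D) (hf : ContDiffOn ℝ (⊤ : ℕ∞) (fun p : ℝ × ℝ => Ψ p.1 p.2) D) :
    ContDiffOn ℝ (⊤ : ℕ∞) (fun p : ℝ × ℝ => rho0F Ψ p.1 p.2) D ∧
    ContDiffOn ℝ (⊤ : ℕ∞) (fun p : ℝ × ℝ => rhobar0F Ψ p.1 p.2) D ∧
    ContDiffOn ℝ (⊤ : ℕ∞) (fun p : ℝ × ℝ => rho3F Ψ p.1 p.2) D ∧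
    ContDiffOn ℝ (⊤ : ℕ∞) (fun p : ℝ × ℝ => rho1F Ψ p.1 p.2) D ∧
    ContDiffOn ℝ (⊤ : ℕ∞) (fun p : ℝ × ℝ => rhobar1F Ψ p.1 p.2) D := by
  obtain ⟨hs, ht⟩ := psi_cd hD hf
  obtain ⟨hss, hst⟩ := psi_cd hD hs
  obtain ⟨-, htt⟩ := psi_cd hD ht
  have h0 : ContDiffOn ℝ (⊤ : ℕ∞) (fun p : ℝ × ℝ => rho0F Ψ p.1 p.2) D :=
    (hf.mul hss).add (hs.pow 2)
  have hb0 : ContDiffOn ℝ (⊤ : ℕ∞) (fun p : ℝ × ℝ => rhobar0F Ψ p.1 p.2) D :=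
    (hf.mul htt).add (ht.pow 2)
  have h3 : ContDiffOn ℝ (⊤ : ℕ∞) (fun p : ℝ × ℝ => rho3F Ψ p.1 p.2) D :=
    (hf.mul hst).add (hs.mul ht)
  exact ⟨h0, hb0, h3, ((hf.mul hs).sub (contDiffOn_fst.mul h0)).sub (contDiffOn_snd.mul h3),
    ((hf.mul ht).sub (contDiffOn_snd.mul hb0)).sub (contDiffOn_fst.mul h3)⟩

end rhocd

section horizontal
open Matrix
variable {n : ℕ} {a : (Fin n → ℝ) → Matrix (Fin n) (Fin n) ℝ} {b g : (Fin n → ℝ) → Fin n → ℝ}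
variable {D : Set (ℝ × ℝ)} {Ψ : ℝ → ℝ → ℝ} {x y : Fin n → ℝ}

theorem dA_diff (hda : ∀ i j, DifferentiableAt ℝ (fun z => a z i j) x) (y : Fin n → ℝ) :
    DifferentiableAt ℝ (fun z => ∑ i, ∑ j, a z i j * y i * y j) x :=
  DifferentiableAt.fun_sum fun i _ => DifferentiableAt.fun_sum fun j _ =>
    ((hda i j).mul_const _).mul_const _

theorem dB_diff (hdb : ∀ i, DifferentiableAt ℝ (fun z => b z i) x) (y : Fin n → ℝ) :
    DifferentiableAt ℝ (fun z => oneForm (b z) y) x :=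
  DifferentiableAt.fun_sum fun i _ => (hdb i).mul_const _

theorem day_diff (hda : ∀ i j, DifferentiableAt ℝ (fun z => a z i j) x) (y : Fin n → ℝ) (l : Fin n) :
    DifferentiableAt ℝ (fun z => (a z *ᵥ y) l) x :=
  dB_diff (b := fun z j => a z l j) (hda l) y

theorem gForm_diff {E : Type*} [NormedAddCommGroup E] [NormedSpace ℝ E] {x : E}
    {f1 f2 f3 f4 f5 f6 f7 f8 f9 : E → ℝ} {h1 h2 h3 h4 h5 h6 h7 : E → ℝ}
    (hf1 : DifferentiableAt ℝ f1 x) (hf2 : DifferentiableAt ℝ f2 x) (hf3 : DifferentiableAt ℝ f3 x)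
    (hf4 : DifferentiableAt ℝ f4 x) (hf5 : DifferentiableAt ℝ f5 x) (hf6 : DifferentiableAt ℝ f6 x)
    (hf7 : DifferentiableAt ℝ f7 x) (hf8 : DifferentiableAt ℝ f8 x) (hf9 : DifferentiableAt ℝ f9 x)
    (hh1 : DifferentiableAt ℝ h1 x) (hh2 : DifferentiableAt ℝ h2 x) (hh3 : DifferentiableAt ℝ h3 x)
    (hh4 : DifferentiableAt ℝ h4 x) (hh5 : DifferentiableAt ℝ h5 x) (hh6 : DifferentiableAt ℝ h6 x)
    (hh7 : DifferentiableAt ℝ h7 x) (hne : f7 x ≠ 0) :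
    DifferentiableAt ℝ (fun z => gForm (f1 z) (f2 z) (f3 z) (f4 z) (f5 z) (f6 z) (f7 z) (f8 z) (f9 z)
      (h1 z) (h2 z) (h3 z) (h4 z) (h5 z) (h6 z) (h7 z)) x := by
  have hne2 : f7 x ^ 2 ≠ 0 := pow_ne_zero 2 hne
  unfold gForm
  fun_prop (disch := assumption)

theorem gExp_diff (hD : IsOpen D) (hf : ContDiffOn ℝ (⊤ : ℕ∞) (fun p : ℝ × ℝ => Ψ p.1 p.2) D)
    (hda : ∀ i j, DifferentiableAt ℝ (fun z => a z i j) x)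
    (hdb : ∀ i, DifferentiableAt ℝ (fun z => b z i) x)
    (hdg : ∀ i, DifferentiableAt ℝ (fun z => g z i) x)
    (ha : (a x).PosDef) (hy : y ≠ 0) (hm : (sVar (a x) (b x) y, sVar (a x) (g x) y) ∈ D)
    (i j : Fin n) : DifferentiableAt ℝ (fun z => gExp (a z) (b z) (g z) Ψ y i j) x := by
  have hA := (dA_diff hda y).hasFDerivAt
  have hB := (dB_diff hdb y).hasFDerivAt
  have hG := (dB_diff hdg y).hasFDerivAt
  have hpos := Qd_pos ha hy
  obtain ⟨h0, hb0, h3, h1, hb1⟩ := rho_cd hD hf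
  have hne : alph (a x) y ≠ 0 := (Real.sqrt_pos.2 hpos).ne'
  exact gForm_diff
    (chain_all hD hf hA hB hG hpos rfl rfl rfl hm).2.1.differentiableAt
    (comp_deriv hD h0 hA hB hG hpos rfl rfl hm).differentiableAt
    (comp_deriv hD hb0 hA hB hG hpos rfl rfl hm).differentiableAt
    (comp_deriv hD h3 hA hB hG hpos rfl rfl hm).differentiableAt
    (comp_deriv hD h1 hA hB hG hpos rfl rfl hm).differentiableAt
    (comp_deriv hD hb1 hA hB hG hpos rfl rfl hm).differentiableAt
    (hA.sqrt hpos.ne').differentiableAt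
    (s_deriv hA hB hpos).differentiableAt (s_deriv hA hG hpos).differentiableAt
    (hda i j) (day_diff hda y i) (day_diff hda y j) (hdb i) (hdb j) (hdg i) (hdg j) hne

theorem horiz (hD : IsOpen D) (hf : ContDiffOn ℝ (⊤ : ℕ∞) (fun p : ℝ × ℝ => Ψ p.1 p.2) D)
    (hda : ∀ i j, DifferentiableAt ℝ (fun z => a z i j) x)
    (hdb : ∀ i, DifferentiableAt ℝ (fun z => b z i) x)
    (hdg : ∀ i, DifferentiableAt ℝ (fun z => g z i) x)
    (ha : (a x).PosDef) (hy : y ≠ 0) {s t al : ℝ} (hs : s = sVar (a x) (b x) y)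
    (ht : t = sVar (a x) (g x) y) (hal : al = alph (a x) y) (hm : (s, t) ∈ D)
    (k : Fin n) :
    pd (fun z => Fm (a z) (b z) (g z) Ψ y ^ 2) x k
      = rhoF Ψ s t * pd (fun z => ∑ i, ∑ j, a z i j * y i * y j) x k
        + 2 * (al * (Ψ s t * Ds Ψ s t)) * pd (fun z => oneForm (b z) y) x k
        + 2 * (al * (Ψ s t * Dt Ψ s t)) * pd (fun z => oneForm (g z) y) x k ∧
    ∀ l, pd (fun z => Mm (a z) (b z) (g z) Ψ y l) x k
      = ((-s * rho1F Ψ s t - t * rhobar1F Ψ s t) / al ^ 2 / 2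
            * pd (fun z => ∑ i, ∑ j, a z i j * y i * y j) x k
          + rho1F Ψ s t / al * pd (fun z => oneForm (b z) y) x k
          + rhobar1F Ψ s t / al * pd (fun z => oneForm (g z) y) x k) * (a x *ᵥ y) l
        + rhoF Ψ s t * pd (fun z => (a z *ᵥ y) l) x k
        + (rho1F Ψ s t / al / 2 * pd (fun z => ∑ i, ∑ j, a z i j * y i * y j) x k
          + rho0F Ψ s t * pd (fun z => oneForm (b z) y) x k
          + rho3F Ψ s t * pd (fun z => oneForm (g z) y) x k) * b x l
        + (al * (Ψ s t * Ds Ψ s t)) * pd (fun z => b z l) x k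
        + (rhobar1F Ψ s t / al / 2 * pd (fun z => ∑ i, ∑ j, a z i j * y i * y j) x k
          + rho3F Ψ s t * pd (fun z => oneForm (b z) y) x k
          + rhobar0F Ψ s t * pd (fun z => oneForm (g z) y) x k) * g x l
        + (al * (Ψ s t * Dt Ψ s t)) * pd (fun z => g z l) x k := by
  obtain ⟨h0, h1, h2, h3⟩ := chain_all hD hf (dA_diff hda y).hasFDerivAt (dB_diff hdb y).hasFDerivAt
    (dB_diff hdg y).hasFDerivAt (Qd_pos ha hy) hs ht hal hm
  constructor
  · have h0' : HasFDerivAt (fun z => Fm (a z) (b z) (g z) Ψ y ^ 2) _ x := h0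
    rw [pd_of h0']
    simp only [_root_.add_apply, _root_.smul_apply, smul_eq_mul, pd]
  · intro l
    have hM : HasFDerivAt (fun z => Mm (a z) (b z) (g z) Ψ y l) _ x :=
      (((h1.fun_mul (day_diff hda y l).hasFDerivAt).fun_add
        (h2.fun_mul (hdb l).hasFDerivAt)).fun_add (h3.fun_mul (hdg l).hasFDerivAt))
    rw [pd_of hM]
    have hs' : oneForm (b x) y / √(∑ i, ∑ j, a x i j * y i * y j) = s := hs.symm
    have ht' : oneForm (g x) y / √(∑ i, ∑ j, a x i j * y i * y j) = t := ht.symm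
    have hal' : √(∑ i, ∑ j, a x i j * y i * y j) = al := hal.symm
    simp only [_root_.add_apply, _root_.smul_apply, smul_eq_mul, pd, hs', ht']
    rw [hal']
    ring

end horizontal

section christoffel
open Matrix
variable {n : ℕ} {a : (Fin n → ℝ) → Matrix (Fin n) (Fin n) ℝ} {v : (Fin n → ℝ) → Fin n → ℝ}
variable {x y : Fin n → ℝ}

theorem pd_A (hda : ∀ i j, DifferentiableAt ℝ (fun z => a z i j) x) (y : Fin n → ℝ) (k : Fin n) :
    pd (fun z => ∑ i, ∑ j, a z i j * y i * y j) x k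
      = ∑ i, ∑ j, pd (fun z => a z i j) x k * y i * y j := by
  have h : HasFDerivAt (fun z => ∑ i, ∑ j, a z i j * y i * y j)
      (∑ i, ∑ j, y j • y i • fderiv ℝ (fun z => a z i j) x) x :=
    HasFDerivAt.fun_sum fun i _ => HasFDerivAt.fun_sum fun j _ =>
      ((hda i j).hasFDerivAt.mul_const _).mul_const _
  rw [pd_of h]
  simp only [_root_.sum_apply, _root_.smul_apply, smul_eq_mul, pd]
  refine Finset.sum_congr rfl fun i _ => Finset.sum_congr rfl fun j _ => ?_
  ring

theorem pd_ay (hda : ∀ i j, DifferentiableAt ℝ (fun z => a z i j) x) (y : Fin n → ℝ) (l k : Fin n) :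
    pd (fun z => (a z *ᵥ y) l) x k = ∑ j, pd (fun z => a z l j) x k * y j :=
  pd_sum_mul (hda l) y k

theorem pd_B (hdv : ∀ i, DifferentiableAt ℝ (fun z => v z i) x) (y : Fin n → ℝ) (k : Fin n) :
    pd (fun z => oneForm (v z) y) x k = ∑ j, pd (fun z => v z j) x k * y j :=
  pd_sum_mul hdv y k

theorem chr_symm (hsym : ∀ i j k, pd (fun z => a z i j) x k = pd (fun z => a z j i) x k)
    (m i j : Fin n) : chr a x m i j = chr a x m j i := by
  unfold chr
  congr 1
  refine Finset.sum_congr rfl fun l _ => ?_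
  rw [hsym i j l]; ring

theorem ch1 (ha : (a x).PosDef) (hda : ∀ i j, DifferentiableAt ℝ (fun z => a z i j) x)
    (hsym : ∀ i j k, pd (fun z => a z i j) x k = pd (fun z => a z j i) x k) (y : Fin n → ℝ)
    (l : Fin n) :
    (a x *ᵥ alphaG a x y) l = 1 / 2 * (∑ k, pd (fun z => (a z *ᵥ y) l) x k * y k
      - 1 / 2 * pd (fun z => ∑ i, ∑ j, a z i j * y i * y j) x l) := by
  set c : Fin n → ℝ := fun l => 1 / 4 * ∑ j, ∑ k, (pd (fun z => a z k l) x j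
    + pd (fun z => a z j l) x k - pd (fun z => a z j k) x l) * y j * y k with hc
  have h : alphaG a x y = (a x)⁻¹ *ᵥ c := by
    ext i
    change _ = ∑ l, (a x)⁻¹ i l * c l
    simp only [alphaG, chr, hc, Finset.mul_sum, Finset.sum_mul]
    rw [Finset.sum_comm' (t' := Finset.univ) (s' := fun _ => Finset.univ) (by simp)]
    rw [Finset.sum_comm]
    rw [Finset.sum_congr rfl fun j _ => Finset.sum_comm]
    rw [Finset.sum_comm]
    refine Finset.sum_congr rfl fun l _ => ?_
    rw [Finset.sum_comm]
    refine Finset.sum_congr rfl fun j _ => Finset.sum_congr rfl fun k _ => ?_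
    rw [hsym k j l]; ring
  rw [h, mul_inv_mulVec ha, hc]
  dsimp only
  simp_rw [pd_A hda, pd_ay hda, sub_mul, add_mul, Finset.sum_sub_distrib, Finset.sum_add_distrib,
    Finset.sum_mul]
  have f1 : ∑ j, ∑ k, pd (fun z => a z k l) x j * y j * y k
      = ∑ k, ∑ j, pd (fun z => a z l j) x k * y j * y k := by
    refine Finset.sum_congr rfl fun j _ => Finset.sum_congr rfl fun k _ => ?_
    rw [hsym l k]; ring
  have f2 : ∑ j, ∑ k, pd (fun z => a z j l) x k * y j * y k
      = ∑ k, ∑ j, pd (fun z => a z l j) x k * y j * y k := by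
    rw [Finset.sum_comm]
    refine Finset.sum_congr rfl fun j _ => Finset.sum_congr rfl fun k _ => ?_
    rw [hsym l k]
  rw [f1, f2]
  ring

theorem ch2 (hdv : ∀ i, DifferentiableAt ℝ (fun z => v z i) x) (y : Fin n → ℝ) :
    r00 a v x y = ∑ k, pd (fun z => oneForm (v z) y) x k * y k - 2 * (v x ⬝ᵥ alphaG a x y) := by
  have e0 : r00 a v x y = ∑ i, ∑ j, covD a v x i j * y i * y j := by
    have e1 : ∑ i, ∑ j, covD a v x i j * y i * y j = ∑ i, ∑ j, covD a v x j i * y i * y j := by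
      rw [Finset.sum_comm]
      refine Finset.sum_congr rfl fun j _ => Finset.sum_congr rfl fun k _ => ?_
      ring
    have e2 : r00 a v x y = 1 / 2 * (∑ i, ∑ j, covD a v x i j * y i * y j)
        + 1 / 2 * (∑ i, ∑ j, covD a v x j i * y i * y j) := by
      simp only [r00, rSym, Finset.mul_sum, ← Finset.sum_add_distrib]
      refine Finset.sum_congr rfl fun j _ => Finset.sum_congr rfl fun k _ => ?_
      ring
    rw [e2, ← e1]; ring
  rw [e0]
  simp_rw [pd_B hdv, covD, sub_mul, Finset.sum_sub_distrib, Finset.sum_mul]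
  congr 1
  · rw [Finset.sum_comm]
  · simp only [dotProduct, alphaG, Finset.mul_sum]
    rw [Finset.sum_congr rfl fun j _ => Finset.sum_comm]
    rw [Finset.sum_comm]
    refine Finset.sum_congr rfl fun m _ => ?_
    refine Finset.sum_congr rfl fun j _ => Finset.sum_congr rfl fun k _ => ?_
    ring

theorem ch3 (hsym : ∀ i j k, pd (fun z => a z i j) x k = pd (fun z => a z j i) x k)
    (hdv : ∀ i, DifferentiableAt ℝ (fun z => v z i) x) (y : Fin n → ℝ) (l : Fin n) :
    s0low a v x y l = 1 / 2 * (∑ k, pd (fun z => v z l) x k * y k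
      - pd (fun z => oneForm (v z) y) x l) := by
  rw [pd_B hdv, ← Finset.sum_sub_distrib, Finset.mul_sum, s0low]
  refine Finset.sum_congr rfl fun k _ => ?_
  have : ∑ m, v x m * chr a x m l k = ∑ m, v x m * chr a x m k l :=
    Finset.sum_congr rfl fun m _ => by rw [chr_symm hsym]
  rw [sSym, covD, covD, this]
  ring

theorem ch5 (y : Fin n → ℝ) : y ⬝ᵥ s0low a v x y = 0 := by
  have h : y ⬝ᵥ s0low a v x y = - (y ⬝ᵥ s0low a v x y) := by
    simp only [dotProduct, s0low, Finset.mul_sum]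
    conv_lhs => rw [Finset.sum_comm]
    simp only [← Finset.sum_neg_distrib]
    refine Finset.sum_congr rfl fun j _ => Finset.sum_congr rfl fun k _ => ?_
    simp only [sSym]
    ring
  linarith

theorem ch4 (ha : (a x).PosDef) (y : Fin n → ℝ) : a x *ᵥ sUp0 a v x y = s0low a v x y :=
  mul_inv_mulVec ha _

end christoffel


section finish
open Matrix
variable {n : ℕ}

theorem quadInv_symm {a : Matrix (Fin n) (Fin n) ℝ} (ha : a.PosDef) (u v : Fin n → ℝ) :
    u ⬝ᵥ (a⁻¹ *ᵥ v) = v ⬝ᵥ (a⁻¹ *ᵥ u) := by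
  have h := symm_dot ha (a⁻¹ *ᵥ u) (a⁻¹ *ᵥ v)
  rw [mul_inv_mulVec ha, mul_inv_mulVec ha] at h
  rw [← h, dotProduct_comm]

theorem gExp_inj {a : Matrix (Fin n) (Fin n) ℝ} {b g y : Fin n → ℝ} {Ψ : ℝ → ℝ → ℝ}
    (ha : a.PosDef) (hy : y ≠ 0) {s t : ℝ} (hs : s = sVar a b y) (ht : t = sVar a g y)
    (hP : Ψ s t ≠ 0) (hPi : PiF Ψ s t ≠ 0)
    (hGa : GammaF Ψ (quadInv a b b) (quadInv a g g) (quadInv a b g) s t ≠ 0)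
    (v : Fin n → ℝ) (hv : ∀ l, ∑ i, gExp a b g Ψ y i l * v i = 0) : v = 0 := by
  have hQ := Qd_pos ha hy
  obtain ⟨al, hal⟩ : ∃ al, al = alph a y := ⟨_, rfl⟩
  have hal0 : al ≠ 0 := by rw [hal]; exact (Real.sqrt_pos.2 hQ).ne'
  have hal2 : (a *ᵥ y) ⬝ᵥ y = al ^ 2 := by
    rw [dotProduct_comm, ← Qd_eq, hal]; exact (Real.sq_sqrt hQ.le).symm
  have hb : b ⬝ᵥ y = s * al := by
    rw [hs, hal]; exact (div_mul_cancel₀ _ (hal ▸ hal0)).symm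
  have hg : g ⬝ᵥ y = t * al := by
    rw [ht, hal]; exact (div_mul_cancel₀ _ (hal ▸ hal0)).symm
  obtain ⟨u0, hu0⟩ : ∃ u, u = (a *ᵥ y) ⬝ᵥ v := ⟨_, rfl⟩
  obtain ⟨u1, hu1⟩ : ∃ u, u = b ⬝ᵥ v := ⟨_, rfl⟩
  obtain ⟨u2, hu2⟩ : ∃ u, u = g ⬝ᵥ v := ⟨_, rfl⟩
  obtain ⟨k0, hk0⟩ : ∃ k, k = (-s * rho1F Ψ s t - t * rhobar1F Ψ s t) / al ^ 2 * u0
      + rho1F Ψ s t / al * u1 + rhobar1F Ψ s t / al * u2 := ⟨_, rfl⟩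
  obtain ⟨k1, hk1⟩ : ∃ k, k = rho1F Ψ s t / al * u0 + rho0F Ψ s t * u1 + rho3F Ψ s t * u2 :=
    ⟨_, rfl⟩
  obtain ⟨k2, hk2⟩ : ∃ k, k = rhobar1F Ψ s t / al * u0 + rho3F Ψ s t * u1
      + rhobar0F Ψ s t * u2 := ⟨_, rfl⟩
  have hvec : (Ψ s t * PiF Ψ s t) • (a *ᵥ v) + k0 • (a *ᵥ y) + k1 • b + k2 • g = 0 := by
    ext l
    have h := hv l
    rw [gExp_sum ha y v l hs ht hal rfl rfl rfl rfl rfl rfl, ← hu0, ← hu1, ← hu2, ← hk0, ← hk1,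
      ← hk2] at h
    simpa [rhoF] using h
  have hd : ∀ w : Fin n → ℝ, Ψ s t * PiF Ψ s t * (w ⬝ᵥ (a *ᵥ v)) + k0 * (w ⬝ᵥ (a *ᵥ y))
      + k1 * (w ⬝ᵥ b) + k2 * (w ⬝ᵥ g) = 0 := by
    intro w
    have h := congrArg (fun z => w ⬝ᵥ z) hvec
    simpa only [dotProduct_add, dotProduct_smul, smul_eq_mul, dotProduct_zero] using h
  have hinv : ∀ u z : Fin n → ℝ, (a⁻¹ *ᵥ u) ⬝ᵥ (a *ᵥ z) = u ⬝ᵥ z := by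
    intro u z
    rw [symm_dot ha, mul_inv_mulVec ha]
  have h0 := hd y
  have h1 := hd (a⁻¹ *ᵥ b)
  have h2 := hd (a⁻¹ *ᵥ g)
  rw [symm_dot ha, symm_dot ha, hal2, dotProduct_comm y b, dotProduct_comm y g, hb, hg, ← hu0] at h0
  rw [hinv, hinv, ← hu1, hb, dotProduct_comm _ b, dotProduct_comm _ g, quadInv_symm ha g b,
    ← quadInv_eq, ← quadInv_eq] at h1
  rw [hinv, hinv, ← hu2, hg, dotProduct_comm _ b, dotProduct_comm _ g,
    ← quadInv_eq, ← quadInv_eq] at h2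
  obtain ⟨z0, z1, z2⟩ := inj_core (Ψ s t) (Ds Ψ s t) (Dt Ψ s t) (Ds (Ds Ψ) s t) (Dt (Ds Ψ) s t)
    (Dt (Dt Ψ) s t) al s t (quadInv a b b) (quadInv a g g) (quadInv a b g) (PiF Ψ s t) (JF Ψ s t)
    _ rfl (div_mul_cancel₀ _ hPi) rfl (rho0F Ψ s t) (rhobar0F Ψ s t) (rho3F Ψ s t) (rho1F Ψ s t)
    (rhobar1F Ψ s t) u0 u1 u2 hal0 hP hGa hPi rfl rfl rfl rfl rfl k0 k1 k2 hk0 hk1 hk2 h0 h1 h2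
  have y0 : k0 = 0 := by rw [hk0, z0, z1, z2]; ring
  have y1 : k1 = 0 := by rw [hk1, z0, z1, z2]; ring
  have y2 : k2 = 0 := by rw [hk2, z0, z1, z2]; ring
  have hvv := hd v
  rw [y0, y1, y2] at hvv
  have : v ⬝ᵥ (a *ᵥ v) = 0 := by
    have h3 : Ψ s t * PiF Ψ s t * (v ⬝ᵥ (a *ᵥ v)) = 0 := by linear_combination hvv
    exact (mul_eq_zero.1 h3).resolve_left (mul_ne_zero hP hPi)
  by_contra hne
  have h4 := Qd_pos ha hne
  rw [Qd_eq] at h4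
  exact h4.ne' this

theorem sol {a : (Fin n → ℝ) → Matrix (Fin n) (Fin n) ℝ} {b g : (Fin n → ℝ) → Fin n → ℝ}
    {D : Set (ℝ × ℝ)} {Ψ : ℝ → ℝ → ℝ} {x y : Fin n → ℝ}
    (hD : IsOpen D) (hf : ContDiffOn ℝ (⊤ : ℕ∞) (fun p : ℝ × ℝ => Ψ p.1 p.2) D)
    (hda : ∀ i j, DifferentiableAt ℝ (fun z => a z i j) x)
    (hdb : ∀ i, DifferentiableAt ℝ (fun z => b z i) x)
    (hdg : ∀ i, DifferentiableAt ℝ (fun z => g z i) x)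
    (hsym : ∀ i j k, pd (fun z => a z i j) x k = pd (fun z => a z j i) x k)
    (ha : (a x).PosDef) (hy : y ≠ 0) {s t al B G Th Rb Rg : ℝ} (hs : s = sVar (a x) (b x) y)
    (ht : t = sVar (a x) (g x) y) (hal : al = alph (a x) y) (hm : (s, t) ∈ D)
    (hB : B = quadInv (a x) (b x) (b x)) (hG : G = quadInv (a x) (g x) (g x))
    (hTh : Th = quadInv (a x) (b x) (g x))
    (hRb : Rb = r00 a b x y - (2 * al / PiF Ψ s t) *
            (Ds Ψ s t * contrS a b b x y + Dt Ψ s t * contrS a g b x y))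
    (hRg : Rg = r00 a g x y - (2 * al / PiF Ψ s t) *
            (Ds Ψ s t * contrS a b g x y + Dt Ψ s t * contrS a g g x y))
    (hP : Ψ s t ≠ 0) (hPi : PiF Ψ s t ≠ 0) (hGa : GammaF Ψ B G Th s t ≠ 0)
    {c1 c2 c3 : ℝ}
    (hc1 : c1 * (2 * GammaF Ψ B G Th s t) = (Ds (Ds Ψ) s t + (G - t ^ 2) * JF Ψ s t) * Rb
                      + (Dt (Ds Ψ) s t - (Th - s * t) * JF Ψ s t) * Rg)
    (hc2 : c2 * (2 * GammaF Ψ B G Th s t) = (Dt (Dt Ψ) s t + (B - s ^ 2) * JF Ψ s t) * Rg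
                      + (Dt (Ds Ψ) s t - (Th - s * t) * JF Ψ s t) * Rb)
    (hc3 : c3 * (2 * GammaF Ψ B G Th s t * Ψ s t * al) =
        (rho1F Ψ s t + pi2F Ψ s t * (Th - s * t) - pi1F Ψ s t * (G - t ^ 2)) * Rb
          + (rhobar1F Ψ s t - pi2F Ψ s t * (B - s ^ 2) + pi1F Ψ s t * (Th - s * t)) * Rg)
    {w : Fin n → ℝ}
    (hw : w = alphaG a x y + (al / PiF Ψ s t) • (Ds Ψ s t • sUp0 a b x y + Dt Ψ s t • sUp0 a g x y)
      + c1 • ((a x)⁻¹ *ᵥ b x) + c2 • ((a x)⁻¹ *ᵥ g x) + c3 • y) (l : Fin n) :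
    ∑ i, gExp (a x) (b x) (g x) Ψ y i l * w i
      = 1 / 4 * (2 * ∑ k, pd (fun z => Mm (a z) (b z) (g z) Ψ y l) x k * y k
        - pd (fun z => Fm (a z) (b z) (g z) Ψ y ^ 2) x l) := by
  have hQ := Qd_pos ha hy
  have hal0 : al ≠ 0 := by rw [hal]; exact (Real.sqrt_pos.2 hQ).ne'
  have hal2 : (a x *ᵥ y) ⬝ᵥ y = al ^ 2 := by
    rw [dotProduct_comm, ← Qd_eq, hal]; exact (Real.sq_sqrt hQ.le).symm
  have hb : b x ⬝ᵥ y = s * al := by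
    rw [hs, hal]; exact (div_mul_cancel₀ _ (hal ▸ hal0)).symm
  have hg : g x ⬝ᵥ y = t * al := by
    rw [ht, hal]; exact (div_mul_cancel₀ _ (hal ▸ hal0)).symm
  -- contractions of derivatives with y
  obtain ⟨A0, hA0⟩ : ∃ A0, A0 = ∑ k, pd (fun z => ∑ i, ∑ j, a z i j * y i * y j) x k * y k :=
    ⟨_, rfl⟩
  obtain ⟨B0, hB0⟩ : ∃ A0, A0 = ∑ k, pd (fun z => oneForm (b z) y) x k * y k := ⟨_, rfl⟩
  obtain ⟨G0, hG0⟩ : ∃ A0, A0 = ∑ k, pd (fun z => oneForm (g z) y) x k * y k := ⟨_, rfl⟩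
  have hM : ∑ k, pd (fun z => Mm (a z) (b z) (g z) Ψ y l) x k * y k
      = ((-s * rho1F Ψ s t - t * rhobar1F Ψ s t) / al ^ 2 / 2 * A0
          + rho1F Ψ s t / al * B0 + rhobar1F Ψ s t / al * G0) * (a x *ᵥ y) l
        + rhoF Ψ s t * ∑ k, pd (fun z => (a z *ᵥ y) l) x k * y k
        + (rho1F Ψ s t / al / 2 * A0 + rho0F Ψ s t * B0 + rho3F Ψ s t * G0) * b x l
        + (al * (Ψ s t * Ds Ψ s t)) * ∑ k, pd (fun z => b z l) x k * y k
        + (rhobar1F Ψ s t / al / 2 * A0 + rho3F Ψ s t * B0 + rhobar0F Ψ s t * G0) * g x l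
        + (al * (Ψ s t * Dt Ψ s t)) * ∑ k, pd (fun z => g z l) x k * y k := by
    rw [hA0, hB0, hG0]
    simp only [Finset.mul_sum, Finset.sum_mul, ← Finset.sum_add_distrib]
    refine Finset.sum_congr rfl fun k _ => ?_
    rw [(horiz hD hf hda hdb hdg ha hy hs ht hal hm k).2 l]
    ring
  rw [hM, (horiz hD hf hda hdb hdg ha hy hs ht hal hm l).1]
  have hAG : (a x *ᵥ y) ⬝ᵥ alphaG a x y = A0 / 4 := by
    rw [← symm_dot ha]
    simp only [dotProduct]
    simp_rw [ch1 ha hda hsym]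
    have e : ∑ i, y i * ∑ k, pd (fun z => (a z *ᵥ y) i) x k * y k = A0 := by
      rw [hA0]
      simp_rw [pd_ay hda, pd_A hda, Finset.mul_sum, Finset.sum_mul, Finset.mul_sum]
      rw [Finset.sum_comm]
      refine Finset.sum_congr rfl fun k _ => Finset.sum_congr rfl fun i _ =>
        Finset.sum_congr rfl fun j _ => ?_
      ring
    have e2 : ∑ i, y i * pd (fun z => ∑ i, ∑ j, a z i j * y i * y j) x i = A0 := by
      rw [hA0]
      exact Finset.sum_congr rfl fun k _ => mul_comm _ _
    have e3 : ∀ i, y i * (1 / 2 * (∑ k, pd (fun z => (a z *ᵥ y) i) x k * y k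
      - 1 / 2 * pd (fun z => ∑ i, ∑ j, a z i j * y i * y j) x i))
      = 1 / 2 * (y i * ∑ k, pd (fun z => (a z *ᵥ y) i) x k * y k)
        - 1 / 4 * (y i * pd (fun z => ∑ i, ∑ j, a z i j * y i * y j) x i) := by
      intro i; ring
    simp_rw [e3]
    rw [Finset.sum_sub_distrib, ← Finset.mul_sum, ← Finset.mul_sum, e, e2]
    ring
  have hbG := ch2 (a := a) hdb y
  have hgG := ch2 (a := a) hdg y
  rw [← hB0] at hbG
  rw [← hG0] at hgG
  have hs0 : ∀ v : (Fin n → ℝ) → Fin n → ℝ, (a x *ᵥ y) ⬝ᵥ sUp0 a v x y = 0 := by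
    intro v
    rw [← symm_dot ha, ch4 ha, ch5]
  have hay : ∀ u : Fin n → ℝ, (a x *ᵥ y) ⬝ᵥ ((a x)⁻¹ *ᵥ u) = u ⬝ᵥ y := by
    intro u
    rw [← symm_dot ha, mul_inv_mulVec ha, dotProduct_comm]
  have hW0 : (a x *ᵥ y) ⬝ᵥ w = A0 / 4 + (c1 * (s * al) + c2 * (t * al) + c3 * al ^ 2) := by
    rw [hw]
    simp only [dotProduct_add, dotProduct_smul, smul_eq_mul, hAG, hs0, hay, hb, hg, hal2]
    ring
  have hW1 : b x ⬝ᵥ w = B0 / 2 - Rb / 2 + (c1 * B + c2 * Th + c3 * (s * al)) := by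
    rw [hw, hRb]
    simp only [dotProduct_add, dotProduct_smul, smul_eq_mul, hb, ← quadInv_eq, ← hB, ← hTh]
    change _ + al / _ * (_ * contrS a b b x y + _ * contrS a g b x y) + _ + _ + _ = _
    linear_combination (1 / 2) * hbG
  have hW2 : g x ⬝ᵥ w = G0 / 2 - Rg / 2 + (c1 * Th + c2 * G + c3 * (t * al)) := by
    rw [hw, hRg]
    simp only [dotProduct_add, dotProduct_smul, smul_eq_mul, hg]
    rw [quadInv_symm ha (g x) (b x), ← quadInv_eq, ← quadInv_eq, ← hG, ← hTh]
    change _ + al / _ * (_ * contrS a b g x y + _ * contrS a g g x y) + _ + _ + _ = _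
    linear_combination (1 / 2) * hgG
  have haw : (a x *ᵥ w) l = (a x *ᵥ alphaG a x y) l
      + al / PiF Ψ s t * (Ds Ψ s t * s0low a b x y l + Dt Ψ s t * s0low a g x y l)
      + c1 * b x l + c2 * g x l + c3 * (a x *ᵥ y) l := by
    rw [hw]
    simp only [mulVec_add, mulVec_smul, ch4 ha, mul_inv_mulVec ha, Pi.add_apply, Pi.smul_apply,
      smul_eq_mul]
  rw [gExp_sum ha y w l hs ht hal rfl rfl rfl rfl rfl rfl, haw, ch1 ha hda hsym, ch3 hsym hdb,
    ch3 hsym hdg, hW0, hW1, hW2]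
  obtain ⟨i1, i2, i3⟩ := alg_core (Ψ s t) (Ds Ψ s t) (Dt Ψ s t) (Ds (Ds Ψ) s t) (Dt (Ds Ψ) s t)
    (Dt (Dt Ψ) s t) al s t B G Th Rb Rg (PiF Ψ s t) (JF Ψ s t)
    (GammaF Ψ B G Th s t) rfl (div_mul_cancel₀ _ hPi) rfl (rho0F Ψ s t) (rhobar0F Ψ s t)
    (rho3F Ψ s t) (rho1F Ψ s t) (rhobar1F Ψ s t) (pi1F Ψ s t) (pi2F Ψ s t) _ _ _ c1 c2 c3 _ _ _
    hal0 hP hGa rfl rfl rfl rfl rfl rfl rfl rfl rfl rfl hc1 hc2 hc3 rfl rfl rfl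
  have hrho : rhoF Ψ s t * (al / PiF Ψ s t) = al * Ψ s t := by
    rw [rhoF]; field_simp
  have hrho' : rhoF Ψ s t = Ψ s t * PiF Ψ s t := rfl
  rw [← hrho'] at i1 i2 i3
  generalize (∑ k, pd (fun z => (a z *ᵥ y) l) x k * y k) = q1
  generalize (∑ k, pd (fun z => b z l) x k * y k) = q2
  generalize (∑ k, pd (fun z => g z l) x k * y k) = q3
  generalize pd (fun z => ∑ i, ∑ j, a z i j * y i * y j) x l = q4
  generalize pd (fun z => oneForm (b z) y) x l = q5
  generalize pd (fun z => oneForm (g z) y) x l = q6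
  generalize (a x *ᵥ y) l = q7
  linear_combination q7 * i3 + b x l * i1 + g x l * i2
    + (Ds Ψ s t * (1 / 2 * (q2 - q5)) + Dt Ψ s t * (1 / 2 * (q3 - q6))) * hrho

end finish

/-- spray coefficients of the (α,β,γ)-metric in terms of those of `α`. -/
theorem statement12
    (n : ℕ) (hn : 2 ≤ n)
    (U : Set (Fin n → ℝ)) (hU : IsOpen U)
    (a : (Fin n → ℝ) → Matrix (Fin n) (Fin n) ℝ)
    (haS : ∀ i j, ContDiffOn ℝ (⊤ : ℕ∞) (fun x => a x i j) U)
    (haP : ∀ x ∈ U, (a x).PosDef)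
    (bv gv : (Fin n → ℝ) → Fin n → ℝ)
    (hbS : ∀ i, ContDiffOn ℝ (⊤ : ℕ∞) (fun x => bv x i) U)
    (hgS : ∀ i, ContDiffOn ℝ (⊤ : ℕ∞) (fun x => gv x i) U)
    (b₀ g₀ : ℝ) (hb₀ : 0 < b₀) (hg₀ : 0 < g₀)
    (hb : ∀ x ∈ U, Real.sqrt (quadInv (a x) (bv x) (bv x)) < b₀)
    (hg : ∀ x ∈ U, Real.sqrt (quadInv (a x) (gv x) (gv x)) < g₀)
    (Ψ : ℝ → ℝ → ℝ)
    (hΨ : ContDiffOn ℝ (⊤ : ℕ∞) (fun p : ℝ × ℝ => Ψ p.1 p.2)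
      (Set.Ioo (-b₀) b₀ ×ˢ Set.Ioo (-g₀) g₀))
    (hΨpos : ∀ p ∈ Set.Ioo (-b₀) b₀ ×ˢ Set.Ioo (-g₀) g₀, 0 < Ψ p.1 p.2)
    (hPipos : ∀ x ∈ U, ∀ y : Fin n → ℝ, y ≠ 0 →
      0 < PiF Ψ (sVar (a x) (bv x) y) (sVar (a x) (gv x) y))
    (hΓpos : ∀ x ∈ U, ∀ y : Fin n → ℝ, y ≠ 0 →
      0 < GammaF Ψ (quadInv (a x) (bv x) (bv x)) (quadInv (a x) (gv x) (gv x))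
          (quadInv (a x) (bv x) (gv x)) (sVar (a x) (bv x) y) (sVar (a x) (gv x) y))
 :
    ∀ x ∈ U, ∀ y : Fin n → ℝ, y ≠ 0 →
      ∀ p q Bq Gq Θq Rb Rg : ℝ,
        p = sVar (a x) (bv x) y → q = sVar (a x) (gv x) y →
        Bq = quadInv (a x) (bv x) (bv x) → Gq = quadInv (a x) (gv x) (gv x) →
        Θq = quadInv (a x) (bv x) (gv x) →
        Rb = r00 a bv x y - (2 * alph (a x) y / PiF Ψ p q) *
            (Ds Ψ p q * contrS a bv bv x y + Dt Ψ p q * contrS a gv bv x y) →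
        Rg = r00 a gv x y - (2 * alph (a x) y / PiF Ψ p q) *
            (Ds Ψ p q * contrS a bv gv x y + Dt Ψ p q * contrS a gv gv x y) →
        ∀ i, sprayF (fun z w => Fm (a z) (bv z) (gv z) Ψ w) x y i =
          alphaG a x y i
            + (alph (a x) y / PiF Ψ p q) *
                (Ds Ψ p q * sUp0 a bv x y i + Dt Ψ p q * sUp0 a gv x y i)
            + (1 / (2 * GammaF Ψ Bq Gq Θq p q)) *
                (((Ds (Ds Ψ) p q + (Gq - q ^ 2) * JF Ψ p q) * Rb
                      + (Dt (Ds Ψ) p q - (Θq - p * q) * JF Ψ p q) * Rg)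
                    * (∑ l, (a x)⁻¹ i l * bv x l)
                  + ((Dt (Dt Ψ) p q + (Bq - p ^ 2) * JF Ψ p q) * Rg
                      + (Dt (Ds Ψ) p q - (Θq - p * q) * JF Ψ p q) * Rb)
                    * (∑ l, (a x)⁻¹ i l * gv x l)
                  + (1 / Ψ p q) *
                      ((rho1F Ψ p q + pi2F Ψ p q * (Θq - p * q)
                            - pi1F Ψ p q * (Gq - q ^ 2)) * Rb
                        + (rhobar1F Ψ p q - pi2F Ψ p q * (Bq - p ^ 2)
                            + pi1F Ψ p q * (Θq - p * q)) * Rg)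
                    * (y i / alph (a x) y)) := by
  intro x hx y hy p q Bq Gq Θq Rb Rg hp hq hB hG hTh hRb hRg i
  have hD : IsOpen (Set.Ioo (-b₀) b₀ ×ˢ Set.Ioo (-g₀) g₀) := isOpen_Ioo.prod isOpen_Ioo
  have hUx : U ∈ nhds x := hU.mem_nhds hx
  have hmem : ∀ z ∈ U, ∀ y : Fin n → ℝ, y ≠ 0 → (sVar (a z) (bv z) y, sVar (a z) (gv z) y) ∈
      Set.Ioo (-b₀) b₀ ×ˢ Set.Ioo (-g₀) g₀ := fun z hz y hy =>
    ⟨sVar_mem (haP z hz) hy _ (hb z hz), sVar_mem (haP z hz) hy _ (hg z hz)⟩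
  have hda : ∀ i j, DifferentiableAt ℝ (fun z => a z i j) x := fun i j =>
    ((haS i j).contDiffAt hUx).differentiableAt (by simp)
  have hdb : ∀ i, DifferentiableAt ℝ (fun z => bv z i) x := fun i =>
    ((hbS i).contDiffAt hUx).differentiableAt (by simp)
  have hdg : ∀ i, DifferentiableAt ℝ (fun z => gv z i) x := fun i =>
    ((hgS i).contDiffAt hUx).differentiableAt (by simp)
  have hsym : ∀ i j k, pd (fun z => a z i j) x k = pd (fun z => a z j i) x k := by
    intro i j k
    apply pd_congr
    filter_upwards [hUx] with z hz using posDef_symm (haP z hz) i j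
  have ha := haP x hx
  have hgm : ∀ z ∈ U, ∀ i j, gmatF (fun z w => Fm (a z) (bv z) (gv z) Ψ w) z y i j
      = gExp (a z) (bv z) (gv z) Ψ y i j := fun z hz i j =>
    vert2 hD hΨ (haP z hz) hy (hmem z hz) i j
  have hm : (p, q) ∈ Set.Ioo (-b₀) b₀ ×ˢ Set.Ioo (-g₀) g₀ := by
    rw [hp, hq]; exact hmem x hx y hy
  have hP : Ψ p q ≠ 0 := (hΨpos (p, q) hm).ne'
  have hPi : PiF Ψ p q ≠ 0 := by rw [hp, hq]; exact (hPipos x hx y hy).ne'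
  have hGa : GammaF Ψ Bq Gq Θq p q ≠ 0 := by
    rw [hp, hq, hB, hG, hTh]; exact (hΓpos x hx y hy).ne'
  have hal0 : alph (a x) y ≠ 0 := (Real.sqrt_pos.2 (Qd_pos ha hy)).ne'
  have hEL := EL_generic
    (gg := fun z i j => gmatF (fun z w => Fm (a z) (bv z) (gv z) Ψ w) z y i j)
    (M := fun z l => Mm (a z) (bv z) (gv z) Ψ y l)
    (N := fun z => Fm (a z) (bv z) (gv z) Ψ y ^ 2) (x := x) (y := y)
    (by
      intro i j
      refine (gExp_diff hD hΨ hda hdb hdg ha hy (hmem x hx y hy) i j).congr_of_eventuallyEq ?_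
      filter_upwards [hUx] with z hz using hgm z hz i j)
    (by
      filter_upwards [hUx] with z hz i j
      rw [hgm z hz, hgm z hz, gExp_symm (haP z hz)])
    (by
      filter_upwards [hUx] with z hz l
      simp_rw [hgm z hz]
      exact gExp_y (haP z hz) hy l)
    (by
      filter_upwards [hUx] with z hz using Mm_y (haP z hz) hy)
  set g := gmatF (fun z w => Fm (a z) (bv z) (gv z) Ψ w) x y with hgdef
  have hinj : IsUnit g.det := by
    rw [isUnit_iff_ne_zero]
    intro h0
    obtain ⟨v, hv0, hv⟩ := Matrix.exists_mulVec_eq_zero_iff.2 h0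
    apply hv0
    refine gExp_inj ha hy hp hq hP hPi (hB ▸ hG ▸ hTh ▸ hGa) v fun l => ?_
    have h1 := congrFun hv l
    change ∑ j, g l j * v j = 0 at h1
    rw [← h1]
    refine Finset.sum_congr rfl fun j _ => ?_
    rw [hgdef, hgm x hx, gExp_symm ha]
  obtain ⟨w, hw⟩ : ∃ w : Fin n → ℝ, w = _ := ⟨_, rfl⟩
  have hsol := sol hD hΨ hda hdb hdg hsym ha hy hp hq rfl hm hB hG hTh hRb hRg hP hPi hGa
    (div_mul_cancel₀ _ (mul_ne_zero two_ne_zero hGa)) (div_mul_cancel₀ _ (mul_ne_zero two_ne_zero hGa))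
    (div_mul_cancel₀ _ (mul_ne_zero (mul_ne_zero (mul_ne_zero two_ne_zero hGa) hP) hal0)) hw
  have hgw : Matrix.mulVec g w = fun l => 1 / 4 *
      (2 * ∑ k, pd (fun z => Mm (a z) (bv z) (gv z) Ψ y l) x k * y k
        - pd (fun z => Fm (a z) (bv z) (gv z) Ψ y ^ 2) x l) := by
    ext l
    rw [← hsol l]
    change ∑ j, g l j * w j = _
    refine Finset.sum_congr rfl fun j _ => ?_
    rw [hgdef, hgm x hx, gExp_symm ha]
  have hspray : sprayF (fun z w => Fm (a z) (bv z) (gv z) Ψ w) x y i = w i := by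
    have h1 : Matrix.mulVec g⁻¹ (Matrix.mulVec g w) = w := by
      rw [Matrix.mulVec_mulVec, Matrix.nonsing_inv_mul _ hinj, Matrix.one_mulVec]
    rw [← congrFun h1 i, hgw, sprayF, Finset.mul_sum]
    change _ = ∑ l, g⁻¹ i l * _
    refine Finset.sum_congr rfl fun l _ => ?_
    rw [← hgdef, ← hEL l]
    ring
  rw [hspray, hw]
  simp only [Pi.add_apply, Pi.smul_apply, smul_eq_mul]
  change _ + _ + _ * (∑ l, (a x)⁻¹ i l * bv x l) + _ * (∑ l, (a x)⁻¹ i l * gv x l) + _ = _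
  field_simp
  ring
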